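/- Suppose an $n \times n$ Hermitian matrix $\sigma$ can be written as a convex combination of unitary conjugates of a fixed $n \times n$ Hermitian matrix $\rho$: $\sigma = \sum_{i=1}^N p_i U_i \rho U_i^\dagger$, where each $U_i$ is unitary, $p_i \geq 0$, and $\sum_{i=1}^N p_i = 1$. Suppose further that $q = (q_1, \ldots, q_N)$ is a probability vector with $q \prec p = (p_1, \ldots, p_N)$. Then there exist $n \times n$ unitary matrices $V_1, \ldots, V_N$ such that $\sigma = \sum_{i=1}^N q_i V_i \rho V_i^\dagger$. -/

import Mathlib

open Matrix

/-- Partial sum of the first `k` entries of a vector indexed by `Fin N`. -/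
noncomputable def psum {N : ℕ} (v : Fin N → ℝ) (k : ℕ) : ℝ :=
  ∑ i ∈ Finset.univ.filter (fun i : Fin N => (i : ℕ) < k), v i

/-- `q` is majorized by `p`: the partial sums of the nonincreasing rearrangement of `q`
are dominated by those of the nonincreasing rearrangement of `p`, with equal total sums. -/
def Majorizes {N : ℕ} (q p : Fin N → ℝ) : Prop :=
  ∃ qs ps : Fin N → ℝ,
    (∃ σ : Equiv.Perm (Fin N), qs = q ∘ σ) ∧ Antitone qs ∧
    (∃ τ : Equiv.Perm (Fin N), ps = p ∘ τ) ∧ Antitone ps ∧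
    (∀ k : ℕ, k < N → psum qs k ≤ psum ps k) ∧ psum qs N = psum ps N

/-!
For isometries `V j` and coefficients `a j ≥ 0`, the equation `∑ j, a j • (V j * (V j)ᴴ) = c • 1`
holds iff the Kempf–Ness functional `h ↦ ∑ j, a j * log det ((V j)ᴴ * h * V j) - c * log det h` is
nonnegative on positive definite matrices; its derivative at `1` is the defect of the equation.
Writing `ρ` and `-σ` through flags of eigenspaces turns `σ = ∑ i, q i • (V i * ρ * (V i)ᴴ)` into
such an equation, with coefficients depending linearly on `q`.

The set of admissible `q` is convex. Given solutions `U`, `U'` for two weights, some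
`U + (w / 2) • U'` with `|w| = 1` has a functional for the summed weights which is bounded below:
otherwise counterexamples `h` at the roots of unity of a large order, assembled block diagonally
and changed to the Fourier basis, have a block Cholesky factor whose diagonal blocks violate
the inequalities for `U` and `U'` on average. A tuple of unitaries maximising the infimum of the
functional then has a nonnegative functional, because moving the flags by `h^(1/2)` shifts the
infimum by the value at `h`.

Finally, `q ≺ p` puts `q` in the convex hull of the permutations of `p` (Rado), all admissible.
-/

section Loewner

open scoped ComplexOrder MatrixOrder

variable {m k : Type*} [Fintype m] [DecidableEq m] [Fintype k] [DecidableEq k]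

lemma conjTranspose_mul_self_of_mem {W : Matrix m m ℂ} (hW : W ∈ unitaryGroup m ℂ) : Wᴴ * W = 1 :=
  mem_unitaryGroup_iff'.1 hW

lemma mul_conjTranspose_self_of_mem {W : Matrix m m ℂ} (hW : W ∈ unitaryGroup m ℂ) : W * Wᴴ = 1 :=
  mem_unitaryGroup_iff.1 hW

lemma exists_unitary_diagonal {A : Matrix m m ℂ} (hA : A.IsHermitian) :
    ∃ W ∈ unitaryGroup m ℂ, ∃ e : m → ℝ, A = W * diagonal (fun i => (e i : ℂ)) * Wᴴ :=
  ⟨hA.eigenvectorUnitary, hA.eigenvectorUnitary.2, hA.eigenvalues, by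
    conv_lhs => rw [hA.spectral_theorem, Unitary.conjStarAlgAut_apply]
    rfl⟩

lemma exists_unitary_diagonal_of_posSemidef {A : Matrix m m ℂ} (hA : A.PosSemidef) :
    ∃ W ∈ unitaryGroup m ℂ, ∃ e : m → ℝ, (∀ i, 0 ≤ e i) ∧
      A = W * diagonal (fun i => (e i : ℂ)) * Wᴴ := by
  obtain ⟨W, hW, e, rfl⟩ := exists_unitary_diagonal hA.1
  have hWu : IsUnit W := .of_mul_eq_one Wᴴ (mul_conjTranspose_self_of_mem hW)
  refine ⟨W, hW, e, fun i => ?_, rfl⟩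
  exact_mod_cast posSemidef_diagonal_iff.1 (hWu.posSemidef_star_right_conjugate_iff.1 hA) i

lemma exists_unitary_diagonal_of_posDef {A : Matrix m m ℂ} (hA : A.PosDef) :
    ∃ W ∈ unitaryGroup m ℂ, ∃ e : m → ℝ, (∀ i, 0 < e i) ∧
      A = W * diagonal (fun i => (e i : ℂ)) * Wᴴ := by
  obtain ⟨W, hW, e, rfl⟩ := exists_unitary_diagonal hA.1
  have hWu : IsUnit W := .of_mul_eq_one Wᴴ (mul_conjTranspose_self_of_mem hW)
  refine ⟨W, hW, e, fun i => ?_, rfl⟩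
  exact_mod_cast posDef_diagonal_iff.1 (hWu.posDef_star_right_conjugate_iff.1 hA) i

lemma mulVec_injective_of_isometry {m k : Type*} [Fintype m] [Fintype k] [DecidableEq k]
    {V : Matrix m k ℂ} (hV : Vᴴ * V = 1) : Function.Injective V.mulVec := by
  intro x y hxy
  simpa only [mulVec_mulVec, hV, one_mulVec] using congrArg (Vᴴ *ᵥ ·) hxy

lemma mulVec_injective_of_gram_posDef {m k : Type*} [Fintype m] [Fintype k]
    {A : Matrix m k ℂ} (hA : (Aᴴ * A).PosDef) : Function.Injective A.mulVec := by
  classical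
  intro x y hxy
  refine mulVec_injective_iff_isUnit.2 hA.isUnit ?_
  simp only [← mulVec_mulVec, hxy]

lemma exists_loewner_bounds {m : Type*} [Finite m] [DecidableEq m] {h : Matrix m m ℂ}
    (hh : h.PosDef) :
    ∃ t : ℝ, 0 < t ∧ t⁻¹ • (1 : Matrix m m ℂ) ≤ h ∧ h ≤ t • (1 : Matrix m m ℂ) := by
  cases nonempty_fintype m
  obtain ⟨W, hW, e, he, rfl⟩ := exists_unitary_diagonal_of_posDef hh
  have conj_one (r : ℝ) : r • (1 : Matrix m m ℂ) = W * diagonal (fun _ => (r : ℂ)) * Wᴴ := by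
    rw [← smul_one_eq_diagonal, mul_smul_comm, mul_one, smul_mul_assoc,
      mul_conjTranspose_self_of_mem hW, Complex.coe_smul]
  have conj_le {d d' : m → ℝ} (hd : ∀ i, d i ≤ d' i) :
      W * diagonal (fun i => (d i : ℂ)) * Wᴴ ≤ W * diagonal (fun i => (d' i : ℂ)) * Wᴴ := by
    refine star_right_conjugate_le_conjugate ?_ W
    rw [Matrix.le_iff, diagonal_sub, posSemidef_diagonal_iff]
    exact fun i => by simpa using hd i
  have ht (i : m) : e i ≤ 1 + ∑ j, (e j + (e j)⁻¹) ∧ (e i)⁻¹ ≤ 1 + ∑ j, (e j + (e j)⁻¹) := by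
    have := Finset.single_le_sum (f := fun j => e j + (e j)⁻¹)
      (fun j _ => (add_pos (he j) (inv_pos.2 (he j))).le) (Finset.mem_univ i)
    have := he i
    have := inv_pos.2 (he i)
    constructor <;> linarith
  have ht0 : 0 < 1 + ∑ j, (e j + (e j)⁻¹) :=
    add_pos_of_pos_of_nonneg one_pos
      (Finset.sum_nonneg fun j _ => (add_pos (he j) (inv_pos.2 (he j))).le)
  refine ⟨_, ht0, ?_, ?_⟩ <;> rw [conj_one] <;> refine conj_le fun i => ?_
  · exact inv_le_of_inv_le₀ (he i) (ht i).2
  · exact (ht i).1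

lemma posDef_of_smul_one_le {m : Type*} [DecidableEq m] {h : Matrix m m ℂ} {r : ℝ} (hr : 0 < r)
    (hh : r • (1 : Matrix m m ℂ) ≤ h) : h.PosDef := by
  have := (Matrix.PosDef.one.smul hr).add_posSemidef (Matrix.le_iff.1 hh)
  rwa [add_sub_cancel] at this

/-- The logarithm of the modulus of the determinant (with value `0` at a singular matrix): the
terms of the Kempf–Ness functional are of this form. -/
noncomputable def logDet (A : Matrix m m ℂ) : ℝ := Real.log ‖A.det‖

lemma logDet_mul {A B : Matrix m m ℂ} (hA : A.det ≠ 0) (hB : B.det ≠ 0) :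
    logDet (A * B) = logDet A + logDet B := by
  rw [logDet, det_mul, norm_mul, Real.log_mul (norm_ne_zero_iff.2 hA) (norm_ne_zero_iff.2 hB)]
  rfl

lemma logDet_conjTranspose (A : Matrix m m ℂ) : logDet Aᴴ = logDet A := by
  rw [logDet, det_conjTranspose, norm_star, logDet]

lemma logDet_conjTranspose_mul_self {A : Matrix m m ℂ} (hA : A.det ≠ 0) :
    logDet (Aᴴ * A) = 2 * logDet A := by
  rw [logDet_mul (by rwa [det_conjTranspose, star_ne_zero]) hA, logDet_conjTranspose, two_mul]

lemma logDet_conjugate {A B : Matrix m m ℂ} (hA : A.det ≠ 0) (hB : B.det ≠ 0) :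
    logDet (Bᴴ * A * B) = logDet A + 2 * logDet B := by
  rw [mul_assoc, logDet_mul (by rwa [det_conjTranspose, star_ne_zero])
    (by rw [det_mul]; exact mul_ne_zero hA hB), logDet_mul hA hB, logDet_conjTranspose]
  ring

lemma logDet_smul {c : ℂ} (hc : c ≠ 0) {A : Matrix m m ℂ} (hA : A.det ≠ 0) :
    logDet (c • A) = Fintype.card m * Real.log ‖c‖ + logDet A := by
  rw [logDet, det_smul, norm_mul, norm_pow, Real.log_mul
    (pow_ne_zero _ (norm_ne_zero_iff.2 hc)) (norm_ne_zero_iff.2 hA), Real.log_pow, logDet]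

lemma logDet_real_smul_one {r : ℝ} (hr : 0 < r) :
    logDet (r • (1 : Matrix m m ℂ)) = Fintype.card m * Real.log r := by
  rw [← Complex.coe_smul, logDet_smul (by exact_mod_cast hr.ne') (by simp), Complex.norm_real,
    Real.norm_of_nonneg hr.le]
  simp [logDet]

lemma logDet_diagonal {e : m → ℝ} (he : ∀ i, e i ≠ 0) :
    logDet (diagonal fun i => (e i : ℂ)) = ∑ i, Real.log (e i) := by
  rw [logDet, det_diagonal, norm_prod, Real.log_prod (by simpa using he)]
  simp

lemma logDet_unitary_conjugate {W : Matrix m m ℂ} (hW : W ∈ unitaryGroup m ℂ)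
    (A : Matrix m m ℂ) : logDet (W * A * Wᴴ) = logDet A := by
  rw [logDet, det_mul_right_comm, mul_conjTranspose_self_of_mem hW, one_mul, logDet]

lemma one_add_smul_unitary_conjugate {W : Matrix m m ℂ} (hW : W ∈ unitaryGroup m ℂ) (e : m → ℝ)
    (t : ℝ) : 1 + t • (W * diagonal (fun i => (e i : ℂ)) * Wᴴ) =
      W * diagonal (fun i => ((1 + t * e i : ℝ) : ℂ)) * Wᴴ := by
  have hdiag : diagonal (fun i => ((1 + t * e i : ℝ) : ℂ)) =
      1 + t • diagonal (fun i => (e i : ℂ)) := by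
    rw [← diagonal_one, ← diagonal_smul, diagonal_add]
    simp
  rw [hdiag, mul_add, add_mul, mul_one, mul_conjTranspose_self_of_mem hW, mul_smul_comm,
    smul_mul_assoc]

lemma logDet_one_add_nonneg {P : Matrix m m ℂ} (hP : P.PosSemidef) : 0 ≤ logDet (1 + P) := by
  obtain ⟨W, hW, e, he, rfl⟩ := exists_unitary_diagonal_of_posSemidef hP
  have hpos (i : m) : 0 < 1 + 1 * e i := by linarith [he i]
  rw [← one_smul ℝ (W * _ * Wᴴ), one_add_smul_unitary_conjugate hW, logDet_unitary_conjugate hW,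
    logDet_diagonal fun i => (hpos i).ne']
  exact Finset.sum_nonneg fun i _ => Real.log_nonneg (by linarith [he i])

lemma exists_eq_conjTranspose_mul_self {m : Type*} [Fintype m] {A : Matrix m m ℂ}
    (hA : A.PosSemidef) : ∃ B : Matrix m m ℂ, A = Bᴴ * B := by
  classical
  open scoped Matrix.Norms.L2Operator in
  exact CStarAlgebra.nonneg_iff_eq_star_mul_self.1 hA.nonneg

lemma logDet_le_logDet {A B : Matrix m m ℂ} (hA : A.PosDef) (hAB : A ≤ B) :
    logDet A ≤ logDet B := by
  obtain ⟨C, rfl⟩ := exists_eq_conjTranspose_mul_self hA.posSemidef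
  have hC : IsUnit C.det := isUnit_iff_ne_zero.2 fun h =>
    hA.det_pos.ne' (by rw [det_mul, h, mul_zero])
  set P := (C⁻¹)ᴴ * (B - Cᴴ * C) * C⁻¹ with hP
  have hP0 : P.PosSemidef := (Matrix.le_iff.1 hAB).conjTranspose_mul_mul_same C⁻¹
  have hB : B = Cᴴ * (1 + P) * C := by
    have hCC : Cᴴ * (C⁻¹)ᴴ = 1 := by
      rw [← conjTranspose_mul, nonsing_inv_mul C hC, conjTranspose_one]
    rw [mul_add, add_mul, mul_one, hP, ← mul_assoc, ← mul_assoc, hCC, mul_assoc (_ * _),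
      nonsing_inv_mul C hC, one_mul, mul_one, add_sub_cancel]
  have hP1 : (1 + P).det ≠ 0 := (Matrix.PosDef.one.add_posSemidef hP0).det_pos.ne'
  rw [hB, logDet_conjugate hP1 hC.ne_zero, logDet_conjTranspose_mul_self hC.ne_zero]
  exact le_add_of_nonneg_left (logDet_one_add_nonneg hP0)

end Loewner

section Cholesky

open scoped ComplexOrder

variable {m : Type*} [Fintype m]

lemma exists_isUpperTriangular_of_posDef [LinearOrder m] {H : Matrix m m ℂ} (hH : H.PosDef) :
    ∃ T : Matrix m m ℂ, T.IsUpperTriangular ∧ H = Tᴴ * T := by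
  let := LocallyFiniteOrderBot.ofIic m (fun i => {j | j ≤ i}) fun i j => by simp
  let K := LDL.lowerInv hH
  have hK : K.det ≠ 0 := (isUnit_det_of_invertible (LDL.lowerInv hH)).ne_zero
  have hD : (LDL.diag hH).PosDef := by
    rw [LDL.diag_eq_lowerInv_conj]
    exact hH.mul_mul_conjTranspose_same (vecMul_injective_iff_isUnit.2
      ((isUnit_iff_isUnit_det _).2 hK.isUnit))
  have hd (i : m) : 0 < LDL.diagEntries hH i := posDef_diagonal_iff.1 hD i
  let S : Matrix m m ℂ := diagonal fun i => (√(LDL.diagEntries hH i).re : ℂ)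
  have hS : LDL.diag hH = Sᴴ * S := by
    rw [diagonal_conjTranspose, diagonal_mul_diagonal, LDL.diag]
    congr 1
    ext1 i
    obtain ⟨hre, him⟩ := Complex.pos_iff.1 (hd i)
    rw [Pi.star_apply, RCLike.star_def, Complex.conj_ofReal, ← Complex.ofReal_mul,
      Real.mul_self_sqrt hre.le, Complex.ext_iff]
    simp [him]
  have hKt : (Kᴴ).IsUpperTriangular := fun _ _ hij =>
    (congrArg star (LDL.lowerInv_triangular hH hij)).trans (star_zero ℂ)
  have : Invertible Kᴴ := invertibleOfIsUnitDet _ (by simpa using hK)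
  refine ⟨S * (Kᴴ)⁻¹, (blockTriangular_diagonal _).mul
    (blockTriangular_inv_of_blockTriangular hKt), ?_⟩
  conv_lhs => rw [← LDL.lower_conj_diag hH, hS, LDL.lower]
  simp only [conjTranspose_mul, conjTranspose_nonsing_inv, conjTranspose_conjTranspose, mul_assoc]
  rfl

lemma exists_blockTriangular_of_posDef {α : Type*} [LinearOrder α] (b : m → α)
    {H : Matrix m m ℂ} (hH : H.PosDef) :
    ∃ T : Matrix m m ℂ, T.BlockTriangular b ∧ H = Tᴴ * T := by
  let key (i : m) : α ×ₗ Fin (Fintype.card m) := toLex (b i, Fintype.equivFin m i)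
  let : LinearOrder m := LinearOrder.lift' key fun i j hij =>
    (Fintype.equivFin m).injective (Prod.ext_iff.1 (toLex.injective hij)).2
  obtain ⟨T, hT, rfl⟩ := exists_isUpperTriangular_of_posDef hH
  exact ⟨T, fun i j hij => hT (show key j < key i from Prod.Lex.toLex_lt_toLex.2 (.inl hij)), rfl⟩

lemma exists_unitary_mul_isUpperTriangular [LinearOrder m] {A : Matrix m m ℂ} (hA : A.det ≠ 0) :
    ∃ W ∈ unitaryGroup m ℂ, ∃ T : Matrix m m ℂ, T.IsUpperTriangular ∧ A = W * T := by
  have hA' : IsUnit A := (isUnit_iff_isUnit_det A).2 hA.isUnit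
  obtain ⟨T, hT, hAT⟩ := exists_isUpperTriangular_of_posDef
    (PosDef.conjTranspose_mul_self A (mulVec_injective_iff_isUnit.2 hA'))
  have hTu : IsUnit T.det := by
    refine isUnit_iff_ne_zero.2 fun h => hA ?_
    have := congrArg det hAT
    simpa [h] using this
  refine ⟨A * T⁻¹, mem_unitaryGroup_iff'.2 ?_, T, hT, by rw [nonsing_inv_mul_cancel_right _ _ hTu]⟩
  rw [star_eq_conjTranspose, conjTranspose_mul, mul_assoc, ← mul_assoc Aᴴ, hAT,
    mul_nonsing_inv_cancel_right _ _ hTu, ← conjTranspose_mul, mul_nonsing_inv T hTu,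
    conjTranspose_one]

end Cholesky

section Fischer

open scoped ComplexOrder MatrixOrder

variable {l m k : Type*} [Fintype l] [DecidableEq l] [Fintype m] [DecidableEq m] [Fintype k]
  [DecidableEq k]

lemma conjTranspose_mul_mul_le {m k : Type*} [Fintype m] [Finite k] {A B : Matrix m m ℂ}
    (hAB : A ≤ B) (V : Matrix m k ℂ) : Vᴴ * A * V ≤ Vᴴ * B * V := by
  have := (Matrix.le_iff.1 hAB).conjTranspose_mul_mul_same V
  rwa [Matrix.mul_sub, Matrix.sub_mul] at this

lemma two_mul_logDet_conjTranspose_mul_le {m k : Type*} [Fintype m] [Fintype k] [DecidableEq k]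
    {P Z : Matrix m k ℂ} (hP : (Pᴴ * P).PosDef) (hPZ : (Pᴴ * Z).det ≠ 0) :
    2 * logDet (Pᴴ * Z) ≤ logDet (Pᴴ * P) + logDet (Zᴴ * Z) := by
  set S := Pᴴ * P
  have hS : IsUnit S.det := hP.det_pos.ne'.isUnit
  have hSi : S⁻¹.PosDef := hP.inv
  have hinj : Function.Injective (Pᴴ * Z).mulVec :=
    mulVec_injective_iff_isUnit.2 ((isUnit_iff_isUnit_det _).2 hPZ.isUnit)
  have residual_gram : (Z - P * (S⁻¹ * (Pᴴ * Z)))ᴴ * (Z - P * (S⁻¹ * (Pᴴ * Z))) =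
      Zᴴ * Z - (Pᴴ * Z)ᴴ * S⁻¹ * (Pᴴ * Z) := by
    have hSP : S⁻¹ * (Pᴴ * (P * (S⁻¹ * (Pᴴ * Z)))) = S⁻¹ * (Pᴴ * Z) := by
      rw [← Matrix.mul_assoc Pᴴ, nonsing_inv_mul_cancel_left _ _ hS]
    simp only [conjTranspose_sub, conjTranspose_mul, conjTranspose_conjTranspose, Matrix.sub_mul,
      Matrix.mul_sub, hSi.1.eq, Matrix.mul_assoc, hSP]
    abel
  have proj_le : (Pᴴ * Z)ᴴ * S⁻¹ * (Pᴴ * Z) ≤ Zᴴ * Z := by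
    rw [Matrix.le_iff, ← residual_gram]
    exact posSemidef_conjTranspose_mul_self _
  have := logDet_le_logDet (hSi.conjTranspose_mul_mul_same hinj) proj_le
  have hinv : logDet S⁻¹ = - logDet S := by
    rw [logDet, det_nonsing_inv, Ring.inverse_eq_inv', norm_inv, Real.log_inv, logDet]
  rw [logDet_conjugate hSi.det_pos.ne' hPZ, hinv] at this
  linarith

lemma card_mul_log_add_logDet_fromBlocks_le {A : Matrix k k ℂ} {B : Matrix k l ℂ}
    {D : Matrix l l ℂ} {δ : ℝ} (hδ : 0 < δ)
    (hG : δ • (1 : Matrix (k ⊕ l) (k ⊕ l) ℂ) ≤ fromBlocks A B Bᴴ D) :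
    Fintype.card k * Real.log δ + logDet D ≤ logDet (fromBlocks A B Bᴴ D) := by
  have hD : D.PosDef := (posDef_of_smul_one_le hδ hG).submatrix (e := Sum.inr) Sum.inr_injective
  let := hD.isUnit.invertible
  have hSchur : δ • (1 : Matrix k k ℂ) ≤ A - B * D⁻¹ * Bᴴ := by
    have : (fromBlocks (A - δ • 1) B Bᴴ D).PosSemidef := by
      have hcorner : (diagonal (Sum.elim 0 fun _ => (δ : ℂ)) :
          Matrix (k ⊕ l) (k ⊕ l) ℂ).PosSemidef := by
        rw [posSemidef_diagonal_iff]
        rintro (_ | _) <;> simp [hδ.le]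
      have hsplit : fromBlocks (A - δ • 1) B Bᴴ D =
          fromBlocks A B Bᴴ D - δ • (1 : Matrix (k ⊕ l) (k ⊕ l) ℂ) +
            diagonal (Sum.elim 0 fun _ => (δ : ℂ)) := by
        ext (i | i) (j | j) <;> simp [one_apply, diagonal_apply]
      rw [hsplit]
      exact (Matrix.le_iff.1 hG).add hcorner
    rw [Matrix.le_iff, sub_right_comm]
    exact (Matrix.PosDef.fromBlocks₂₂ _ _ hD).1 this
  have hdet : logDet (fromBlocks A B Bᴴ D) = logDet D + logDet (A - B * D⁻¹ * Bᴴ) := by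
    rw [logDet, det_fromBlocks₂₂, invOf_eq_nonsing_inv, norm_mul, Real.log_mul, logDet, logDet]
    · exact norm_ne_zero_iff.2 hD.det_pos.ne'
    · exact norm_ne_zero_iff.2 (posDef_of_smul_one_le hδ hSchur).det_pos.ne'
  have := logDet_le_logDet (PosDef.one.smul hδ) hSchur
  rw [logDet_real_smul_one hδ] at this
  linarith

lemma card_mul_log_add_logDet_submatrix_le {G : Matrix m m ℂ} {δ : ℝ} (hδ : 0 < δ)
    (hG : δ • (1 : Matrix m m ℂ) ≤ G) {s : l → m} (hs : Function.Injective s) :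
    (Fintype.card m - Fintype.card l : ℝ) * Real.log δ + logDet (G.submatrix s s) ≤ logDet G := by
  let e : {i // i ∉ Set.range s} ⊕ l ≃ m :=
    (Equiv.sumCongr (.refl _) (Equiv.ofInjective s hs)).trans
      ((Equiv.sumComm _ _).trans (Equiv.Set.sumCompl (Set.range s)))
  have hGe : G.submatrix e e = fromBlocks (G.submatrix (e ∘ Sum.inl) (e ∘ Sum.inl))
      (G.submatrix (e ∘ Sum.inl) s) (G.submatrix (e ∘ Sum.inl) s)ᴴ (G.submatrix s s) := by
    rw [conjTranspose_submatrix, (posDef_of_smul_one_le hδ hG).1.eq]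
    ext (i | i) (j | j) <;> rfl
  have hδe : δ • (1 : Matrix ({i // i ∉ Set.range s} ⊕ l) _ ℂ) ≤ G.submatrix e e := by
    have hsub : G.submatrix e e - δ • (1 : Matrix ({i // i ∉ Set.range s} ⊕ l) _ ℂ) =
        (G - δ • (1 : Matrix m m ℂ)).submatrix e e := by
      ext i j
      simp only [Matrix.sub_apply, Matrix.smul_apply, submatrix_apply, one_apply,
        EmbeddingLike.apply_eq_iff_eq]
    rw [Matrix.le_iff, hsub]
    exact (Matrix.le_iff.1 hG).submatrix e
  have hcard : (Fintype.card {i // i ∉ Set.range s} : ℝ) = Fintype.card m - Fintype.card l := by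
    rw [eq_sub_iff_add_eq, ← Nat.cast_add, ← Fintype.card_sum, Fintype.card_congr e]
  have hdet : logDet (G.submatrix e e) = logDet G := by
    rw [logDet, det_submatrix_equiv_self, logDet]
  rw [← hcard, ← hdet, hGe]
  exact card_mul_log_add_logDet_fromBlocks_le hδ (hGe ▸ hδe)

end Fischer

section BlockTriangular

lemma logDet_blockDiagonal {κ o : Type*} [Fintype κ] [DecidableEq κ] [Fintype o] [DecidableEq o]
    {A : o → Matrix κ κ ℂ} (hA : ∀ d, (A d).det ≠ 0) :
    logDet (blockDiagonal A) = ∑ d, logDet (A d) := by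
  rw [logDet, det_blockDiagonal, norm_prod, Real.log_prod fun d _ => norm_ne_zero_iff.2 (hA d)]
  rfl

variable {β κ o p : Type*} [Fintype β] [Fintype κ] [DecidableEq κ] [Fintype o]
  [LinearOrder o] [Fintype p] [LinearOrder p]

lemma det_eq_prod_det_blockDiag {B : Matrix (κ × o) (κ × o) ℂ} (hB : B.BlockTriangular Prod.snd) :
    B.det = ∏ d, (blockDiag B d).det := by
  rw [hB.det_fintype]
  refine Finset.prod_congr rfl fun d _ => ?_
  let e : κ ≃ {i : κ × o // i.2 = d} :=
    { toFun := fun x => ⟨(x, d), rfl⟩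
      invFun := fun i => i.1.1
      left_inv := fun _ => rfl
      right_inv := by rintro ⟨⟨x, _⟩, rfl⟩; rfl }
  exact (det_submatrix_equiv_self e _).symm

lemma logDet_eq_sum_logDet_blockDiag {B : Matrix (κ × o) (κ × o) ℂ}
    (hB : B.BlockTriangular Prod.snd) (hdet : B.det ≠ 0) :
    logDet B = ∑ d, logDet (blockDiag B d) := by
  rw [det_eq_prod_det_blockDiag hB, Finset.prod_ne_zero_iff] at hdet
  rw [logDet, det_eq_prod_det_blockDiag hB, norm_prod,
    Real.log_prod fun d hd => norm_ne_zero_iff.2 (hdet d hd)]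
  rfl

open scoped ComplexOrder in
lemma sum_logDet_gram_le {Z : Matrix (β × o) (κ × p) ℂ} {s : p → o} (hs : StrictMono s)
    (hZ : ∀ x d y e, s e < d → Z (x, d) (y, e) = 0) {A : p → Matrix β κ ℂ}
    (hA : ∀ x y e, Z (x, s e) (y, e) = A e x y) (hAA : ∀ e, ((A e)ᴴ * A e).PosDef) :
    ∑ e, logDet ((A e)ᴴ * A e) ≤ logDet (Zᴴ * Z) := by
  let P : Matrix (β × o) (κ × p) ℂ := .of fun i j => if i.2 = s j.2 then A j.2 i.1 j.1 else 0
  have hPX (X : Matrix (β × o) (κ × p) ℂ) (i j : κ × p) :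
      (Pᴴ * X) i j = ∑ x, star (A i.2 x i.1) * X (x, s i.2) j := by
    simp only [mul_apply, conjTranspose_apply, P, of_apply, Fintype.sum_prod_type, apply_ite star,
      star_zero, ite_mul, zero_mul, Finset.sum_ite_eq', Finset.mem_univ, if_true]
  have hPP : Pᴴ * P = blockDiagonal fun e => (A e)ᴴ * A e := by
    ext i j
    rw [hPX, blockDiagonal_apply']
    split_ifs with h
    · simp [P, h, mul_apply]
    · simp [P, hs.injective.ne h]
  have hPZ : (Pᴴ * Z).BlockTriangular Prod.snd := fun i j hij => by
    rw [hPX]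
    exact Finset.sum_eq_zero fun x _ => by rw [hZ _ _ _ _ (hs hij), mul_zero]
  have hPZd (e : p) : blockDiag (Pᴴ * Z) e = (A e)ᴴ * A e := by
    ext y y'
    simp only [blockDiag_apply, hPX, hA, mul_apply, conjTranspose_apply]
  have hne (e : p) : ((A e)ᴴ * A e).det ≠ 0 := (hAA e).det_pos.ne'
  have hPZ0 : (Pᴴ * Z).det ≠ 0 := by
    simpa only [det_eq_prod_det_blockDiag hPZ, hPZd] using
      Finset.prod_ne_zero_iff.2 fun e _ => hne e
  have hPPpos : (Pᴴ * P).PosDef := by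
    refine (posSemidef_conjTranspose_mul_self P).posDef_iff_det_ne_zero.2 ?_
    simpa only [hPP, det_blockDiagonal] using Finset.prod_ne_zero_iff.2 fun e _ => hne e
  have := two_mul_logDet_conjTranspose_mul_le hPPpos hPZ0
  rw [hPP, logDet_blockDiagonal hne, logDet_eq_sum_logDet_blockDiag hPZ hPZ0] at this
  simp only [hPZd] at this
  linarith

end BlockTriangular

section Fourier

lemma exists_unitary_castSucc_eq_mul_succ (M : ℕ) :
    ∃ F ∈ unitaryGroup (Fin (M + 1)) ℂ, ∃ z : Fin (M + 1) → Circle,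
      ∀ (j : Fin (M + 1)) (e : Fin M), F j e.castSucc = z j * F j e.succ := by
  let χ : AddChar (ZMod (M + 1)) ℂ := ZMod.stdAddChar
  let s : ℂ := ((√(M + 1))⁻¹ : ℝ)
  have hs : star s * s * (M + 1 : ℕ) = 1 := by
    have hM : (0 : ℝ) ≤ M + 1 := by positivity
    rw [RCLike.star_def, Complex.conj_ofReal, ← Complex.ofReal_mul, ← Complex.ofReal_natCast,
      ← Complex.ofReal_mul, Complex.ofReal_eq_one, Nat.cast_add_one, ← mul_inv,
      Real.mul_self_sqrt hM, inv_mul_cancel₀ (by positivity)]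
  let F : Matrix (ZMod (M + 1)) (ZMod (M + 1)) ℂ := .of fun j d => s * χ (-(j * d))
  have hF : Fᴴ * F = 1 := by
    ext d d'
    have hterm (j : ZMod (M + 1)) : star (F j d) * F j d' = star s * s * χ (j * (d - d')) := by
      have : j * (d - d') = j * d + -(j * d') := by ring
      simp only [F, of_apply, star_mul', this, AddChar.map_add_eq_mul, RCLike.star_def,
        ← AddChar.map_neg_eq_conj, neg_neg]
      ring
    simp only [mul_apply, conjTranspose_apply, hterm, ← Finset.mul_sum]
    rw [AddChar.sum_mulShift _ (ZMod.isPrimitive_stdAddChar (M + 1)), ZMod.card, one_apply]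
    simp only [sub_eq_zero]
    split_ifs
    · exact hs
    · simp
  have hχ (j d : ZMod (M + 1)) : F j d = χ j * F j (d + 1) := by
    have : -(j * d) = j + -(j * (d + 1)) := by ring
    simp only [F, of_apply, this, AddChar.map_add_eq_mul]
    ring
  refine ⟨F, mem_unitaryGroup_iff'.2 hF, ZMod.toCircle (N := M + 1), fun j e => ?_⟩
  rw [← Fin.coeSucc_eq_succ]
  exact hχ j e.castSucc

end Fourier

section Pencil

open scoped ComplexOrder MatrixOrder Kronecker

variable {β κ : Type*} [Fintype β] [DecidableEq β] [Fintype κ] [DecidableEq κ] {M : ℕ}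

lemma blockDiagonal_le_blockDiagonal {κ o : Type*} [Finite κ] [Finite o] [DecidableEq o]
    {A B : o → Matrix κ κ ℂ} (hAB : ∀ j, A j ≤ B j) : blockDiagonal A ≤ blockDiagonal B := by
  cases nonempty_fintype κ
  cases nonempty_fintype o
  choose X hX using fun j => exists_eq_conjTranspose_mul_self (Matrix.le_iff.1 (hAB j))
  rw [Matrix.le_iff, ← blockDiagonal_sub, show B - A = fun j => (X j)ᴴ * X j from funext hX,
    blockDiagonal_mul, ← blockDiagonal_conjTranspose]
  exact posSemidef_conjTranspose_mul_self _

lemma blockDiagonal_smul_one {κ o : Type*} [DecidableEq κ] [DecidableEq o] (r : ℝ) :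
    (blockDiagonal fun _ => r • 1 : Matrix (κ × o) (κ × o) ℂ) = r • 1 := by
  rw [← blockDiagonal_one, ← blockDiagonal_smul]
  rfl

lemma conjTranspose_mul_smul_one_mul {W : Matrix κ κ ℂ} (hW : W ∈ unitaryGroup κ ℂ) (r : ℝ) :
    Wᴴ * (r • (1 : Matrix κ κ ℂ)) * W = r • (1 : Matrix κ κ ℂ) := by
  rw [mul_smul_comm, smul_mul_assoc, mul_one, conjTranspose_mul_self_of_mem hW]

lemma mul_kronecker_submatrix_one_apply {β κ o p : Type*} [Fintype β] [Fintype o] [DecidableEq o]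
    (C : Matrix (β × o) (β × o) ℂ) (Y : Matrix β κ ℂ) (s : p → o) (i : β × o) (j : κ × p) :
    (C * Y ⊗ₖ (1 : Matrix o o ℂ).submatrix id s) i j = ∑ x, C i (x, s j.2) * Y x j.1 := by
  simp only [mul_apply, Fintype.sum_prod_type, kroneckerMap_apply, submatrix_apply, one_apply, id,
    mul_ite, mul_one, mul_zero, Finset.sum_ite_eq', Finset.mem_univ, if_true]

lemma one_kronecker_mul_pencil {o p : Type*} [Fintype o] [DecidableEq o] {F : Matrix o o ℂ}
    {S S' : Matrix o p ℂ} {z : o → ℂ} (hF : F * S' = diagonal z * (F * S)) (Y Y' : Matrix β κ ℂ) :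
    ((1 : Matrix β β ℂ) ⊗ₖ F) * (Y ⊗ₖ S + Y' ⊗ₖ S') =
      (blockDiagonal fun j => Y + z j • Y') * ((1 : Matrix κ κ ℂ) ⊗ₖ (F * S)) := by
  have hpencil : (blockDiagonal fun j => Y + z j • Y') = Y ⊗ₖ 1 + Y' ⊗ₖ diagonal z := by
    ext ⟨i, j⟩ ⟨i', j'⟩
    by_cases hj : j = j' <;> simp [blockDiagonal_apply, kroneckerMap_apply, hj, mul_comm]
  rw [hpencil, Matrix.mul_add, Matrix.add_mul]
  simp only [← mul_kronecker_mul, Matrix.one_mul, Matrix.mul_one, hF]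

lemma pencil_gram_eq_submatrix {o p : Type*} [Fintype o] [DecidableEq o]
    {F : Matrix o o ℂ} {s s' : p → o} {z : o → ℂ} (hz : ∀ j e, F j (s' e) = z j * F j (s e))
    {h : o → Matrix β β ℂ} {C : Matrix (β × o) (β × o) ℂ}
    (hCh : Cᴴ * C = ((1 : Matrix β β ℂ) ⊗ₖ F)ᴴ * blockDiagonal h * ((1 : Matrix β β ℂ) ⊗ₖ F))
    {Y Y' : Matrix β κ ℂ} {T : Matrix (β × o) (κ × p) ℂ}
    (hT : T = Y ⊗ₖ (1 : Matrix o o ℂ).submatrix id s + Y' ⊗ₖ (1 : Matrix o o ℂ).submatrix id s') :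
    (C * T)ᴴ * (C * T) =
      (((1 : Matrix κ κ ℂ) ⊗ₖ F)ᴴ *
        (blockDiagonal fun j => (Y + z j • Y')ᴴ * h j * (Y + z j • Y')) *
        ((1 : Matrix κ κ ℂ) ⊗ₖ F)).submatrix (Prod.map id s) (Prod.map id s) := by
  let X := blockDiagonal fun j => Y + z j • Y'
  have hF (t : p → o) : F * (1 : Matrix o o ℂ).submatrix id t = F.submatrix id t :=
    mul_submatrix_one (Equiv.refl o) t F
  have hFT : ((1 : Matrix β β ℂ) ⊗ₖ F) * T = X * ((1 : Matrix κ κ ℂ) ⊗ₖ F.submatrix id s) := by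
    rw [hT, one_kronecker_mul_pencil (z := z), hF]
    rw [hF, hF]
    ext j e
    rw [diagonal_mul, submatrix_apply, submatrix_apply, id, hz]
  have hsub : ((1 : Matrix κ κ ℂ) ⊗ₖ F).submatrix id (Prod.map id s) =
      (1 : Matrix κ κ ℂ) ⊗ₖ F.submatrix id s := rfl
  have hX : (blockDiagonal fun j => (Y + z j • Y')ᴴ * h j * (Y + z j • Y')) =
      Xᴴ * blockDiagonal h * X := by
    rw [blockDiagonal_conjTranspose, ← blockDiagonal_mul, ← blockDiagonal_mul]
  calc (C * T)ᴴ * (C * T) = (((1 : Matrix β β ℂ) ⊗ₖ F) * T)ᴴ * blockDiagonal h *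
        (((1 : Matrix β β ℂ) ⊗ₖ F) * T) := by
        rw [conjTranspose_mul, Matrix.mul_assoc, ← Matrix.mul_assoc Cᴴ, hCh, conjTranspose_mul]
        simp only [Matrix.mul_assoc]
    _ = _ := by
        rw [hFT, hX, submatrix_mul _ _ _ id _ Function.bijective_id,
          submatrix_mul _ _ _ id _ Function.bijective_id, ← conjTranspose_submatrix, hsub,
          submatrix_id_id, conjTranspose_mul]
        simp only [Matrix.mul_assoc]

lemma le_conjTranspose_mul_blockDiagonal_mul {o : Type*} [Fintype o] [DecidableEq o]
    {P : Matrix (κ × o) (κ × o) ℂ} (hP : P ∈ unitaryGroup (κ × o) ℂ) {B : o → Matrix κ κ ℂ} {r : ℝ}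
    (hB : ∀ j, r • 1 ≤ B j) : r • 1 ≤ Pᴴ * blockDiagonal B * P := by
  rw [← conjTranspose_mul_smul_one_mul hP, ← blockDiagonal_smul_one]
  exact conjTranspose_mul_mul_le (blockDiagonal_le_blockDiagonal hB) P

lemma logDet_conjTranspose_mul_blockDiagonal_mul {o : Type*} [Fintype o] [DecidableEq o]
    {P : Matrix (κ × o) (κ × o) ℂ} (hP : P ∈ unitaryGroup (κ × o) ℂ) {B : o → Matrix κ κ ℂ}
    (hB : ∀ j, (B j).det ≠ 0) : logDet (Pᴴ * blockDiagonal B * P) = ∑ j, logDet (B j) := by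
  have := logDet_unitary_conjugate (Unitary.star_mem hP) (blockDiagonal B)
  rwa [star_eq_conjTranspose, conjTranspose_conjTranspose, logDet_blockDiagonal hB] at this

lemma sum_logDet_le_sum_logDet_pencil {F : Matrix (Fin (M + 1)) (Fin (M + 1)) ℂ}
    (hF : F ∈ unitaryGroup (Fin (M + 1)) ℂ) {z : Fin (M + 1) → ℂ}
    (hz : ∀ (j : Fin (M + 1)) (e : Fin M), F j e.castSucc = z j * F j e.succ)
    {h : Fin (M + 1) → Matrix β β ℂ} {C : Matrix (β × Fin (M + 1)) (β × Fin (M + 1)) ℂ}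
    (hC : C.BlockTriangular Prod.snd)
    (hCh : Cᴴ * C = ((1 : Matrix β β ℂ) ⊗ₖ F)ᴴ * blockDiagonal h * ((1 : Matrix β β ℂ) ⊗ₖ F))
    {Y Y' : Matrix β κ ℂ} {δ : ℝ} (hδ : 0 < δ)
    (hY : ∀ j, δ • (1 : Matrix κ κ ℂ) ≤ (Y + z j • Y')ᴴ * h j * (Y + z j • Y'))
    (hg : ∀ d, (Yᴴ * ((blockDiag C d)ᴴ * blockDiag C d) * Y).PosDef) :
    Fintype.card κ * Real.log δ +
        ∑ e : Fin M, logDet (Yᴴ * ((blockDiag C e.succ)ᴴ * blockDiag C e.succ) * Y) ≤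
      ∑ j, logDet ((Y + z j • Y')ᴴ * h j * (Y + z j • Y')) := by
  let T : Matrix (β × Fin (M + 1)) (κ × Fin M) ℂ :=
    Y ⊗ₖ (1 : Matrix _ _ ℂ).submatrix id Fin.succ +
      Y' ⊗ₖ (1 : Matrix _ _ ℂ).submatrix id Fin.castSucc
  let P : Matrix (κ × Fin (M + 1)) (κ × Fin (M + 1)) ℂ := 1 ⊗ₖ F
  have hP : P ∈ unitaryGroup _ ℂ := kronecker_mem_unitary (one_mem _) hF
  have hCT (x : β) (d : Fin (M + 1)) (y : κ) (e : Fin M) : (C * T) (x, d) (y, e) =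
      (C.submatrix (·, d) (·, e.succ) * Y + C.submatrix (·, d) (·, e.castSucc) * Y') x y := by
    simp only [T, Matrix.mul_add, Matrix.add_apply, mul_kronecker_submatrix_one_apply]
    rfl
  have block_eq_zero {d d' : Fin (M + 1)} (hd : d' < d) :
      C.submatrix (·, d) (·, d') = (0 : Matrix β β ℂ) := Matrix.ext fun _ _ => hC hd
  have gram_le : ∑ e : Fin M, logDet ((blockDiag C e.succ * Y)ᴴ * (blockDiag C e.succ * Y)) ≤
      logDet ((C * T)ᴴ * (C * T)) := by
    refine sum_logDet_gram_le Fin.strictMono_succ (fun x d y e hed => ?_) (fun x y e => ?_)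
      fun e => ?_
    · rw [hCT, block_eq_zero hed, block_eq_zero (Fin.castSucc_lt_succ.trans hed),
        Matrix.zero_mul, Matrix.zero_mul, add_zero]
      rfl
    · rw [hCT, block_eq_zero Fin.castSucc_lt_succ, Matrix.zero_mul, add_zero]
      rfl
    · simpa only [conjTranspose_mul, Matrix.mul_assoc] using hg e.succ
  have fischer := card_mul_log_add_logDet_submatrix_le hδ
    (le_conjTranspose_mul_blockDiagonal_mul hP hY) (s := Prod.map id (Fin.succ : Fin M → _))
    (Function.injective_id.prodMap (Fin.succ_injective _))
  rw [← pencil_gram_eq_submatrix hz hCh rfl, logDet_conjTranspose_mul_blockDiagonal_mul hP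
    fun j => (posDef_of_smul_one_le hδ (hY j)).det_pos.ne'] at fischer
  simp only [conjTranspose_mul, Matrix.mul_assoc] at gram_le fischer ⊢
  simp only [Fintype.card_prod, Fintype.card_fin, Nat.cast_mul, Nat.cast_add_one] at fischer
  linarith

end Pencil

section KempfNess

open scoped ComplexOrder MatrixOrder Kronecker

variable {m : Type*} [Fintype m] [DecidableEq m]

/-- The Kempf–Ness functional `h ↦ ∑ aⱼ log det (Vⱼᴴ h Vⱼ) - c log det h` of a weighted tuple of
frames `Vⱼ`, viewed as a function of a positive definite `h`. -/
noncomputable def kempfNess {J : Type*} [Fintype J] {κ : J → Type*} [∀ j, Fintype (κ j)]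
    [∀ j, DecidableEq (κ j)] (a : J → ℝ) (c : ℝ) (V : ∀ j, Matrix m (κ j) ℂ) (h : Matrix m m ℂ) :
    ℝ :=
  ∑ j, a j * logDet ((V j)ᴴ * h * V j) - c * logDet h

variable {J : Type*} [Fintype J] {κ : J → Type*} [∀ j, Fintype (κ j)] [∀ j, DecidableEq (κ j)]

lemma logDet_le_card_mul_log {h : Matrix m m ℂ} (hh : h.PosDef) {R : ℝ} (hR : 0 < R)
    (hhR : h ≤ R • 1) : logDet h ≤ Fintype.card m * Real.log R := by
  rw [← logDet_real_smul_one hR]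
  exact logDet_le_logDet hh hhR

lemma submatrix_zero_gram_of_blockTriangular {m : Type*} [Fintype m] {M : ℕ}
    {C : Matrix (m × Fin (M + 1)) (m × Fin (M + 1)) ℂ} (hC : C.BlockTriangular Prod.snd) :
    (Cᴴ * C).submatrix (·, 0) (·, 0) = (blockDiag C 0)ᴴ * blockDiag C 0 := by
  ext x y
  simp only [submatrix_apply, mul_apply, Fintype.sum_prod_type, Fin.sum_univ_succ,
    conjTranspose_apply, blockDiag_apply]
  simp only [show ∀ x y (d : Fin M), C (x, d.succ) (y, 0) = 0 from fun _ _ d => hC (Fin.succ_pos d),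
    mul_zero, Finset.sum_const_zero, add_zero]

lemma conjTranspose_mul_blockDiagonal_mul_le {o : Type*} [Fintype o] [DecidableEq o]
    {P : Matrix (m × o) (m × o) ℂ} (hP : P ∈ unitaryGroup (m × o) ℂ) {B : o → Matrix m m ℂ} {r : ℝ}
    (hB : ∀ i, B i ≤ r • 1) : Pᴴ * blockDiagonal B * P ≤ r • 1 := by
  rw [← conjTranspose_mul_smul_one_mul hP, ← blockDiagonal_smul_one]
  exact conjTranspose_mul_mul_le (blockDiagonal_le_blockDiagonal hB) P

lemma blockDiag_zero_gram_le {M : ℕ} {C : Matrix (m × Fin (M + 1)) (m × Fin (M + 1)) ℂ}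
    (hC : C.BlockTriangular Prod.snd) {R : ℝ} (hCR : Cᴴ * C ≤ R • 1) :
    (blockDiag C 0)ᴴ * blockDiag C 0 ≤ R • 1 := by
  have hsub := (Matrix.le_iff.1 hCR).submatrix fun x : m => (x, (0 : Fin (M + 1)))
  rw [submatrix_sub, Pi.sub_apply, Pi.sub_apply, submatrix_smul, Pi.smul_apply, Pi.smul_apply,
    submatrix_one _ (Prod.mk_left_injective _),
    submatrix_zero_gram_of_blockTriangular hC] at hsub
  exact Matrix.le_iff.2 hsub

lemma posDef_blockDiagonal {m o : Type*} [Finite m] [Finite o] [DecidableEq o]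
    {h : o → Matrix m m ℂ} (hh : ∀ i, (h i).PosDef) : (blockDiagonal h).PosDef := by
  classical
  cases nonempty_fintype m
  cases nonempty_fintype o
  choose X hX using fun i => exists_eq_conjTranspose_mul_self (hh i).posSemidef
  have hX' : blockDiagonal h = (blockDiagonal X)ᴴ * blockDiagonal X := by
    rw [blockDiagonal_conjTranspose, ← blockDiagonal_mul, ← funext hX]
  have hdet : (blockDiagonal h).det ≠ 0 := by
    rw [det_blockDiagonal]
    exact Finset.prod_ne_zero_iff.2 fun i _ => (hh i).det_pos.ne'
  rw [hX'] at hdet ⊢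
  exact (posSemidef_conjTranspose_mul_self _).posDef_iff_det_ne_zero.2 hdet

lemma exists_blockTriangular_of_unitary_blockDiagonal {o : Type*} [Fintype o] [LinearOrder o]
    {P : Matrix (m × o) (m × o) ℂ} (hP : P ∈ unitaryGroup (m × o) ℂ) {h : o → Matrix m m ℂ}
    (hh : ∀ i, (h i).PosDef) :
    ∃ C : Matrix (m × o) (m × o) ℂ, C.BlockTriangular Prod.snd ∧
      Cᴴ * C = Pᴴ * blockDiagonal h * P ∧ (∀ d, (blockDiag C d).det ≠ 0) ∧
      ∑ d, logDet ((blockDiag C d)ᴴ * blockDiag C d) = ∑ i, logDet (h i) := by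
  have hH : (Pᴴ * blockDiagonal h * P).PosDef :=
    (posDef_blockDiagonal hh).conjTranspose_mul_mul_same
      (mulVec_injective_of_isometry (conjTranspose_mul_self_of_mem hP))
  obtain ⟨C, hC, hCh⟩ := exists_blockTriangular_of_posDef Prod.snd hH
  have hdet : C.det ≠ 0 := fun h0 => hH.det_pos.ne' (by rw [hCh, det_mul, h0, mul_zero])
  have hdetd (d : o) : (blockDiag C d).det ≠ 0 :=
    Finset.prod_ne_zero_iff.1 (det_eq_prod_det_blockDiag hC ▸ hdet) d (Finset.mem_univ d)
  refine ⟨C, hC, hCh.symm, hdetd, ?_⟩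
  rw [← logDet_conjTranspose_mul_blockDiagonal_mul hP fun i => (hh i).det_pos.ne', hCh,
    logDet_conjTranspose_mul_self hdet, logDet_eq_sum_logDet_blockDiag hC hdet, Finset.mul_sum]
  exact Finset.sum_congr rfl fun d _ => logDet_conjTranspose_mul_self (hdetd d)

lemma sum_kempfNess_pencil_ge {a : J → ℝ} (ha : ∀ j, 0 ≤ a j) {c : ℝ} (hc : 0 ≤ c)
    {Y Y' : ∀ j, Matrix m (κ j) ℂ} (hYinj : ∀ j, Function.Injective (Y j).mulVec) {K : ℝ}
    (hK : ∀ h : Matrix m m ℂ, h.PosDef → -K ≤ kempfNess a c Y h) {M : ℕ}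
    {F : Matrix (Fin (M + 1)) (Fin (M + 1)) ℂ} (hF : F ∈ unitaryGroup (Fin (M + 1)) ℂ)
    {z : Fin (M + 1) → ℂ}
    (hz : ∀ (i : Fin (M + 1)) (e : Fin M), F i e.castSucc = z i * F i e.succ)
    {h : Fin (M + 1) → Matrix m m ℂ} (hh : ∀ i, (h i).PosDef) {δ R : ℝ} (hδ : 0 < δ) (hR : 0 < R)
    (hhR : ∀ i, h i ≤ R • 1)
    (hY : ∀ i j, δ • 1 ≤ (Y j + z i • Y' j)ᴴ * h i * (Y j + z i • Y' j)) :
    (∑ j, a j * (Fintype.card (κ j) * Real.log δ)) - c * (Fintype.card m * Real.log R) - M * K ≤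
      ∑ i, kempfNess a c (fun j => Y j + z i • Y' j) (h i) := by
  let P : Matrix (m × Fin (M + 1)) (m × Fin (M + 1)) ℂ := 1 ⊗ₖ F
  have hP : P ∈ unitaryGroup _ ℂ := kronecker_mem_unitary (one_mem _) hF
  obtain ⟨C, hC, hCh, hCdet, hsum⟩ := exists_blockTriangular_of_unitary_blockDiagonal hP hh
  let g d := (blockDiag C d)ᴴ * blockDiag C d
  have hg (d : Fin (M + 1)) : (g d).PosDef := PosDef.conjTranspose_mul_self _ <|
    mulVec_injective_iff_isUnit.2 ((isUnit_iff_isUnit_det _).2 (hCdet d).isUnit)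
  have g_zero_le : logDet (g 0) ≤ Fintype.card m * Real.log R := by
    refine logDet_le_card_mul_log (hg 0) hR (blockDiag_zero_gram_le hC ?_)
    rw [hCh]
    exact conjTranspose_mul_blockDiagonal_mul_le hP hhR
  have frames_ge (j : J) : Fintype.card (κ j) * Real.log δ +
      ∑ e : Fin M, logDet ((Y j)ᴴ * g e.succ * Y j) ≤
      ∑ i, logDet ((Y j + z i • Y' j)ᴴ * h i * (Y j + z i • Y' j)) :=
    sum_logDet_le_sum_logDet_pencil hF hz hC hCh hδ (hY · j)
      fun d => (hg d).conjTranspose_mul_mul_same (hYinj j)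
  rw [Fin.sum_univ_succ] at hsum
  calc _ ≤ ∑ j, a j * (Fintype.card (κ j) * Real.log δ) - c * logDet (g 0) +
        ∑ e : Fin M, kempfNess a c Y (g e.succ) := by
        have slices_ge : ∑ _e : Fin M, -K ≤ ∑ e : Fin M, kempfNess a c Y (g e.succ) :=
          Finset.sum_le_sum fun e _ => hK _ (hg e.succ)
        rw [Finset.sum_const, Finset.card_univ, Fintype.card_fin, nsmul_eq_mul] at slices_ge
        linarith [mul_le_mul_of_nonneg_left g_zero_le hc]
    _ = ∑ j, a j * (Fintype.card (κ j) * Real.log δ +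
        ∑ e : Fin M, logDet ((Y j)ᴴ * g e.succ * Y j)) - c * ∑ i, logDet (h i) := by
        simp only [kempfNess, Finset.sum_sub_distrib, ← hsum, mul_add, Finset.sum_add_distrib,
          Finset.mul_sum]
        rw [Finset.sum_comm]
        ring
    _ ≤ ∑ j, a j * ∑ i, logDet ((Y j + z i • Y' j)ᴴ * h i * (Y j + z i • Y' j)) -
        c * ∑ i, logDet (h i) := by
        gcongr with j
        · exact ha j
        · exact frames_ge j
    _ = _ := by
        simp only [kempfNess, Finset.sum_sub_distrib, Finset.mul_sum]
        rw [Finset.sum_comm]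

end KempfNess

section Circle

open scoped ComplexOrder MatrixOrder

variable {m : Type*} [Fintype m] [DecidableEq m] {J : Type*} [Fintype J] {κ : J → Type*}
  [∀ j, Fintype (κ j)] [∀ j, DecidableEq (κ j)]

lemma kempfNess_add_weights (a a' : J → ℝ) (c c' : ℝ) (V : ∀ j, Matrix m (κ j) ℂ)
    (h : Matrix m m ℂ) :
    kempfNess (a + a') (c + c') V h = kempfNess a c V h + kempfNess a' c' V h := by
  simp only [kempfNess, Pi.add_apply, add_mul, Finset.sum_add_distrib]
  ring

lemma circle_smul_gram {m k : Type*} [Fintype m] (w : Circle) (V : Matrix m k ℂ)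
    (h : Matrix m m ℂ) : ((w : ℂ) • V)ᴴ * h * ((w : ℂ) • V) = Vᴴ * h * V := by
  rw [conjTranspose_smul, Matrix.smul_mul, Matrix.smul_mul, Matrix.mul_smul, smul_smul,
    RCLike.star_def, ← Circle.coe_inv_eq_conj, ← Circle.coe_mul, inv_mul_cancel, Circle.coe_one,
    one_smul]

lemma add_conj_smul {m k : Type*} (Y Y' : Matrix m k ℂ) (w : Circle) :
    Y' + star (w : ℂ) • Y = ((w⁻¹ : Circle) : ℂ) • (Y + (w : ℂ) • Y') := by
  rw [smul_add, smul_smul, ← Circle.coe_mul, inv_mul_cancel, Circle.coe_one, one_smul,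
    Circle.coe_inv_eq_conj, add_comm]
  rfl

variable {a a' : J → ℝ} {c c' : ℝ} {Y Y' : ∀ j, Matrix m (κ j) ℂ} {K K' : ℝ}

lemma exists_circle_kempfNess_pencil_ge (ha : ∀ j, 0 ≤ a j) (ha' : ∀ j, 0 ≤ a' j) (hc : 0 ≤ c)
    (hc' : 0 ≤ c') (hY : ∀ j, Function.Injective (Y j).mulVec)
    (hY' : ∀ j, Function.Injective (Y' j).mulVec)
    (hK : ∀ h : Matrix m m ℂ, h.PosDef → -K ≤ kempfNess a c Y h)
    (hK' : ∀ h : Matrix m m ℂ, h.PosDef → -K' ≤ kempfNess a' c' Y' h)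
    {h : Circle → Matrix m m ℂ} (hh : ∀ w, (h w).PosDef) {δ R : ℝ} (hδ : 0 < δ) (hR : 0 < R)
    (hhR : ∀ w, h w ≤ R • 1)
    (hgram : ∀ (w : Circle) (j : J),
      δ • 1 ≤ (Y j + (w : ℂ) • Y' j)ᴴ * h w * (Y j + (w : ℂ) • Y' j)) :
    ∃ w : Circle,
      -(K + K' + 1) ≤ kempfNess (a + a') (c + c') (fun j => Y j + (w : ℂ) • Y' j) (h w) := by
  let A (b : J → ℝ) (d : ℝ) : ℝ :=
    ∑ j, b j * (Fintype.card (κ j) * Real.log δ) - d * (Fintype.card m * Real.log R)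
  obtain ⟨M, hM⟩ := exists_nat_gt (-(A a c + A a' c') - (K + K'))
  obtain ⟨F, hF, z, hz⟩ := exists_unitary_castSucc_eq_mul_succ M
  by_contra! hlt
  have mean_ge : A a c - M * K ≤
      ∑ i, kempfNess a c (fun j => Y j + (z i : ℂ) • Y' j) (h (z i)) :=
    sum_kempfNess_pencil_ge ha hc hY hK hF hz (fun i => hh (z i)) hδ hR (fun i => hhR (z i))
      fun i j => hgram (z i) j
  have mean_ge' : A a' c' - M * K' ≤
      ∑ i, kempfNess a' c' (fun j => Y j + (z i : ℂ) • Y' j) (h (z i)) := by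
    have := sum_kempfNess_pencil_ge (F := F.map star) (z := fun i => star (z i : ℂ)) (Y' := Y)
      ha' hc' hY' hK' (map_star_mem_unitaryGroup_iff.2 hF)
      (fun i e => by rw [map_apply, map_apply, hz, star_mul']) (fun i => hh (z i)) hδ hR
      (fun i => hhR (z i))
      fun i j => by rw [add_conj_smul, circle_smul_gram]; exact hgram (z i) j
    simpa only [kempfNess, add_conj_smul, circle_smul_gram] using this
  have sum_le : ∑ i, kempfNess (a + a') (c + c') (fun j => Y j + (z i : ℂ) • Y' j) (h (z i)) ≤
      (M + 1) * -(K + K' + 1) := by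
    have := Finset.sum_le_sum fun i (_ : i ∈ Finset.univ) => (hlt (z i)).le
    rwa [Finset.sum_const, Finset.card_univ, Fintype.card_fin, nsmul_eq_mul, Nat.cast_add_one]
      at this
  simp only [kempfNess_add_weights, Finset.sum_add_distrib] at sum_le
  linarith

lemma continuous_kempfNess {X : Type*} [TopologicalSpace X] {V : X → ∀ j, Matrix m (κ j) ℂ}
    (hV : Continuous V) {h : Matrix m m ℂ} (hgram : ∀ x j, ((V x j)ᴴ * h * V x j).PosDef)
    (a : J → ℝ) (c : ℝ) : Continuous fun x => kempfNess a c (V x) h := by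
  refine .sub (continuous_finsetSum _ fun j _ => .mul continuous_const ?_) continuous_const
  refine .log (.norm (.matrix_det ?_)) fun x => norm_ne_zero_iff.2 (hgram x j).det_pos.ne'
  have : Continuous fun x => V x j := continuous_pi_iff.1 hV j
  exact (this.matrix_conjTranspose.matrix_mul continuous_const).matrix_mul this

lemma smul_one_le_smul_one {m : Type*} [DecidableEq m] {r s : ℝ} (hrs : r ≤ s) :
    r • (1 : Matrix m m ℂ) ≤ s • 1 := by
  rw [Matrix.le_iff, ← sub_smul]
  exact PosSemidef.one.smul (sub_nonneg.2 hrs)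

lemma smul_one_le_conjTranspose_mul_mul {k : Type*} [Finite k] [DecidableEq k] {X : Matrix m k ℂ}
    {h : Matrix m m ℂ} {r δ : ℝ} (hr : 0 ≤ r) (hX : δ • 1 ≤ Xᴴ * X) (hh : r • 1 ≤ h) :
    (r * δ) • 1 ≤ Xᴴ * h * X := by
  have hX' : (r * δ) • 1 ≤ r • (Xᴴ * X) := by
    rw [Matrix.le_iff, mul_smul, ← smul_sub]
    exact (Matrix.le_iff.1 hX).smul hr
  have hX'' : r • (Xᴴ * X) = Xᴴ * (r • (1 : Matrix m m ℂ)) * X := by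
    rw [Matrix.mul_smul, Matrix.smul_mul, Matrix.mul_one]
  exact hX'.trans (hX'' ▸ conjTranspose_mul_mul_le hh X)

lemma exists_finset_forall_exists_lt {X ι : Type*} [TopologicalSpace X] [CompactSpace X]
    {f : ι → X → ℝ} (hf : ∀ i, Continuous (f i)) {L : ℝ} (hL : ∀ x, ∃ i, f i x < L) :
    ∃ s : Finset ι, ∀ x, ∃ i ∈ s, f i x < L := by
  obtain ⟨s, hs⟩ := isCompact_univ.elim_finite_subcover (fun i => {x | f i x < L})
    (fun i => isOpen_lt (hf i) continuous_const) fun x _ => Set.mem_iUnion.2 (hL x)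
  exact ⟨s, fun x => by
    simpa only [Set.mem_iUnion, exists_prop, Set.mem_ofPred_eq] using hs (Set.mem_univ x)⟩

theorem exists_circle_kempfNess_pencil_bddBelow (ha : ∀ j, 0 ≤ a j) (ha' : ∀ j, 0 ≤ a' j)
    (hc : 0 ≤ c) (hc' : 0 ≤ c') (hY : ∀ j, Function.Injective (Y j).mulVec)
    (hY' : ∀ j, Function.Injective (Y' j).mulVec)
    (hK : ∀ h : Matrix m m ℂ, h.PosDef → -K ≤ kempfNess a c Y h)
    (hK' : ∀ h : Matrix m m ℂ, h.PosDef → -K' ≤ kempfNess a' c' Y' h) {δ : ℝ} (hδ : 0 < δ)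
    (hgram : ∀ (w : Circle) (j : J),
      δ • 1 ≤ (Y j + (w : ℂ) • Y' j)ᴴ * (Y j + (w : ℂ) • Y' j)) :
    ∃ w : Circle, ∀ h : Matrix m m ℂ, h.PosDef →
      -(K + K' + 1) ≤ kempfNess (a + a') (c + c') (fun j => Y j + (w : ℂ) • Y' j) h := by
  have gram_ge {r : ℝ} (hr : 0 < r) {h : Matrix m m ℂ} (hh : r • 1 ≤ h) (w : Circle) (j : J) :
      (r * δ) • 1 ≤ (Y j + (w : ℂ) • Y' j)ᴴ * h * (Y j + (w : ℂ) • Y' j) :=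
    smul_one_le_conjTranspose_mul_mul hr.le (hgram w j) hh
  by_contra! hlt
  choose h hh hlt using hlt
  choose t ht hth hht using fun w => exists_loewner_bounds (hh w)
  obtain ⟨s, hs⟩ := exists_finset_forall_exists_lt (fun w => continuous_kempfNess
    (V := fun (u : Circle) j => Y j + (u : ℂ) • Y' j) (by fun_prop)
    (fun u j => posDef_of_smul_one_le (mul_pos (inv_pos.2 (ht w)) hδ)
      (gram_ge (inv_pos.2 (ht w)) (hth w) u j)) (a + a') (c + c')) fun u => ⟨u, hlt u⟩
  choose σ hσs hσ using hs
  obtain ⟨R, hR⟩ := (s.image t).exists_le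
  have htR (u : Circle) : t (σ u) ≤ R := hR _ (Finset.mem_image_of_mem t (hσs u))
  have hR0 : 0 < R := (ht (σ 1)).trans_le (htR 1)
  have hRh (u : Circle) : R⁻¹ • 1 ≤ h (σ u) :=
    (smul_one_le_smul_one (inv_anti₀ (ht _) (htR u))).trans (hth _)
  have hhR (u : Circle) : h (σ u) ≤ R • 1 := (hht _).trans (smul_one_le_smul_one (htR u))
  obtain ⟨u, hu⟩ := exists_circle_kempfNess_pencil_ge ha ha' hc hc' hY hY' hK hK'
    (fun u => hh (σ u)) (mul_pos (inv_pos.2 hR0) hδ) hR0 hhR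
    fun u j => gram_ge (inv_pos.2 hR0) (hRh u) u j
  exact hu.not_gt (hσ u)

lemma kempfNess_smul {r : ℂ} (hr : r ≠ 0) {V : ∀ j, Matrix m (κ j) ℂ}
    (hV : ∀ j, Function.Injective (V j).mulVec) {h : Matrix m m ℂ} (hh : h.PosDef) (a : J → ℝ)
    (c : ℝ) : kempfNess a c (fun j => r • V j) h =
      kempfNess a c V h + ∑ j, a j * (Fintype.card (κ j) * (2 * Real.log ‖r‖)) := by
  have hr2 : star r * r ≠ 0 := mul_ne_zero (star_ne_zero.2 hr) hr
  have hframe (j : J) : logDet ((r • V j)ᴴ * h * (r • V j)) =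
      logDet ((V j)ᴴ * h * V j) + Fintype.card (κ j) * (2 * Real.log ‖r‖) := by
    rw [conjTranspose_smul, Matrix.smul_mul, Matrix.smul_mul, Matrix.mul_smul, smul_smul,
      logDet_smul hr2 (hh.conjTranspose_mul_mul_same (hV j)).det_pos.ne', norm_mul, norm_star,
      Real.log_mul (norm_ne_zero_iff.2 hr) (norm_ne_zero_iff.2 hr)]
    ring
  simp only [kempfNess, hframe, mul_add, Finset.sum_add_distrib]
  ring

lemma quarter_smul_one_le_gram {m k : Type*} [Fintype m] [Finite k] [DecidableEq k]
    {U U' : Matrix m k ℂ} (hU : Uᴴ * U = 1) (hU' : U'ᴴ * U' = 1) (w : Circle) :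
    (4⁻¹ : ℝ) • 1 ≤ (U + (w : ℂ) • (2⁻¹ : ℂ) • U')ᴴ * (U + (w : ℂ) • (2⁻¹ : ℂ) • U') := by
  have hw : (w : ℂ) * starRingEnd ℂ w = 1 := by
    rw [Complex.mul_conj, Circle.normSq_coe, Complex.ofReal_one]
  have hsub : (U + (w : ℂ) • (2⁻¹ : ℂ) • U')ᴴ * (U + (w : ℂ) • (2⁻¹ : ℂ) • U') -
      (4⁻¹ : ℝ) • 1 = (2⁻¹ : ℝ) • ((U + (w : ℂ) • U')ᴴ * (U + (w : ℂ) • U')) := by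
    simp only [conjTranspose_add, conjTranspose_smul, Matrix.add_mul, Matrix.mul_add,
      Matrix.smul_mul, Matrix.mul_smul, hU, hU', ← Complex.coe_smul, star_inv₀, star_ofNat]
    match_scalars
    · simp
      linear_combination -(1 / 4) * hw
    all_goals simp; ring
  rw [Matrix.le_iff, hsub]
  exact (posSemidef_conjTranspose_mul_self _).smul (by norm_num)

theorem exists_circle_kempfNess_add_half_smul_bddBelow (ha : ∀ j, 0 ≤ a j) (ha' : ∀ j, 0 ≤ a' j)
    (hc : 0 ≤ c) (hc' : 0 ≤ c') {U U' : ∀ j, Matrix m (κ j) ℂ} (hU : ∀ j, (U j)ᴴ * U j = 1)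
    (hU' : ∀ j, (U' j)ᴴ * U' j = 1)
    (hnonneg : ∀ h : Matrix m m ℂ, h.PosDef → 0 ≤ kempfNess a c U h)
    (hnonneg' : ∀ h : Matrix m m ℂ, h.PosDef → 0 ≤ kempfNess a' c' U' h) :
    ∃ w : Circle, ∃ K : ℝ, ∀ h : Matrix m m ℂ, h.PosDef →
      K ≤ kempfNess (a + a') (c + c') (fun j => U j + (w : ℂ) • (2⁻¹ : ℂ) • U' j) h := by
  have h2 : (2⁻¹ : ℂ) ≠ 0 := by norm_num
  have hU'inj j := mulVec_injective_of_isometry (hU' j)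
  have half_inj (j : J) : Function.Injective ((2⁻¹ : ℂ) • U' j).mulVec := by
    intro x y hxy
    simpa only [smul_mulVec, smul_right_inj h2, (hU'inj j).eq_iff] using hxy
  let K' := ∑ j, a' j * (Fintype.card (κ j) * (2 * Real.log ‖(2⁻¹ : ℂ)‖))
  have half_ge (h : Matrix m m ℂ) (hh : h.PosDef) :
      -(-K') ≤ kempfNess a' c' (fun j => (2⁻¹ : ℂ) • U' j) h := by
    rw [kempfNess_smul h2 hU'inj hh, neg_neg]
    exact le_add_of_nonneg_left (hnonneg' h hh)
  obtain ⟨w, hw⟩ := exists_circle_kempfNess_pencil_bddBelow (K := 0) ha ha' hc hc'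
    (fun j => mulVec_injective_of_isometry (hU j)) half_inj
    (fun h hh => neg_zero.trans_le (hnonneg h hh)) half_ge (by norm_num : (0 : ℝ) < 4⁻¹)
    fun w j => quarter_smul_one_le_gram (hU j) (hU' j) w
  exact ⟨w, _, hw⟩

end Circle

section Moment

open scoped ComplexOrder

variable {m k : Type*} [Fintype m] [DecidableEq m] [Fintype k] [DecidableEq k]

lemma sum_normSq_mul_log_le_log_sum {ι : Type*} [Fintype ι] {v : ι → ℂ}
    (hv : ∑ x, Complex.normSq (v x) = 1) {e : ι → ℝ} (he : ∀ x, 0 < e x) :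
    ∑ x, Complex.normSq (v x) * Real.log (e x) ≤ Real.log (∑ x, Complex.normSq (v x) * e x) :=
  strictConcaveOn_log_Ioi.concaveOn.le_map_sum (fun _ _ => Complex.normSq_nonneg _) hv
    fun x _ => he x

lemma conjTranspose_mul_diagonal_mul_apply_self {m k : Type*} [Fintype m] [DecidableEq m]
    (P : Matrix m k ℂ) (e : m → ℝ) (j : k) :
    (Pᴴ * diagonal (fun x => (e x : ℂ)) * P) j j =
      ((∑ x, Complex.normSq (P x j) * e x : ℝ) : ℂ) := by
  push_cast
  refine (mul_apply ..).trans (Finset.sum_congr rfl fun x _ => ?_)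
  rw [mul_diagonal, conjTranspose_apply, Complex.normSq_eq_conj_mul_self, mul_right_comm]
  rfl

lemma mul_conjTranspose_apply_self {m k : Type*} [Fintype k] (P : Matrix m k ℂ) (x : m) :
    ((P * Pᴴ) x x).re = ∑ j, Complex.normSq (P x j) := by
  rw [mul_apply, Complex.re_sum]
  refine Finset.sum_congr rfl fun j _ => ?_
  rw [conjTranspose_apply, RCLike.star_def, Complex.mul_conj, Complex.ofReal_re]

lemma exists_isometry_diagonal_of_posDef {m k : Type*} [Fintype m] [Fintype k] [DecidableEq k]
    {A : Matrix m m ℂ} (hA : A.PosDef) {V : Matrix m k ℂ} (hV : Vᴴ * V = 1) :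
    ∃ (P : Matrix m k ℂ) (ν : k → ℝ), Pᴴ * P = 1 ∧ P * Pᴴ = V * Vᴴ ∧
      Pᴴ * A * P = diagonal (fun j => (ν j : ℂ)) ∧ logDet (Vᴴ * A * V) = ∑ j, Real.log (ν j) := by
  obtain ⟨Z, hZ, ν, hν, hVZ⟩ := exists_unitary_diagonal_of_posDef
    (hA.conjTranspose_mul_mul_same (mulVec_injective_of_isometry hV))
  have hZ1 := conjTranspose_mul_self_of_mem hZ
  refine ⟨V * Z, ν, ?_, ?_, ?_, ?_⟩
  · rw [conjTranspose_mul, Matrix.mul_assoc, ← Matrix.mul_assoc Vᴴ, hV, Matrix.one_mul, hZ1]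
  · rw [conjTranspose_mul, Matrix.mul_assoc, ← Matrix.mul_assoc Z,
      mul_conjTranspose_self_of_mem hZ, Matrix.one_mul]
  · calc (V * Z)ᴴ * A * (V * Z) = Zᴴ * (Vᴴ * A * V) * Z := by
          simp only [conjTranspose_mul, Matrix.mul_assoc]
      _ = (Zᴴ * Z) * diagonal (fun j => (ν j : ℂ)) * (Zᴴ * Z) := by
          rw [hVZ]
          simp only [Matrix.mul_assoc]
      _ = diagonal fun j => (ν j : ℂ) := by rw [hZ1, Matrix.one_mul, Matrix.mul_one]
  · rw [hVZ, logDet_unitary_conjugate hZ, logDet_diagonal fun j => (hν j).ne']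

lemma sum_mul_log_le_logDet_conjTranspose_mul_diagonal_mul {V : Matrix m k ℂ} (hV : Vᴴ * V = 1)
    {e : m → ℝ} (he : ∀ x, 0 < e x) :
    ∑ x, ((V * Vᴴ) x x).re * Real.log (e x) ≤
      logDet (Vᴴ * diagonal (fun x => (e x : ℂ)) * V) := by
  obtain ⟨P, ν, hP, hPV, hPν, hlog⟩ := exists_isometry_diagonal_of_posDef
    (PosDef.diagonal fun x => Complex.zero_lt_real.2 (he x)) hV
  have hν (j : k) : ν j = ∑ x, Complex.normSq (P x j) * e x := by
    have := conjTranspose_mul_diagonal_mul_apply_self P e j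
    rw [hPν, diagonal_apply_eq] at this
    exact_mod_cast this
  have column_one (j : k) : ∑ x, Complex.normSq (P x j) = 1 := by
    have := conjTranspose_mul_diagonal_mul_apply_self P (fun _ => 1) j
    simp only [Complex.ofReal_one, diagonal_one, Matrix.mul_one, hP, one_apply_eq, mul_one] at this
    exact_mod_cast this.symm
  rw [hlog, ← hPV]
  simp only [mul_conjTranspose_apply_self, Finset.sum_mul]
  rw [Finset.sum_comm]
  refine Finset.sum_le_sum fun j _ => ?_
  rw [hν]
  exact sum_normSq_mul_log_le_log_sum (column_one j) he

variable {J : Type*} [Fintype J] {κ : J → Type*} [∀ j, Fintype (κ j)] [∀ j, DecidableEq (κ j)]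

lemma kempfNess_unitary_conjugate {W : Matrix m m ℂ} (hW : W ∈ unitaryGroup m ℂ) (a : J → ℝ)
    (c : ℝ) (V : ∀ j, Matrix m (κ j) ℂ) (h : Matrix m m ℂ) :
    kempfNess a c V (W * h * Wᴴ) = kempfNess a c (fun j => Wᴴ * V j) h := by
  rw [kempfNess, logDet_unitary_conjugate hW]
  simp only [kempfNess, conjTranspose_mul, conjTranspose_conjTranspose, Matrix.mul_assoc]

theorem kempfNess_nonneg_of_moment_eq {a : J → ℝ} (ha : ∀ j, 0 ≤ a j) {c : ℝ}
    {V : ∀ j, Matrix m (κ j) ℂ} (hV : ∀ j, (V j)ᴴ * V j = 1)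
    (hmoment : ∑ j, a j • (V j * (V j)ᴴ) = c • 1) {h : Matrix m m ℂ} (hh : h.PosDef) :
    0 ≤ kempfNess a c V h := by
  obtain ⟨W, hW, e, he, rfl⟩ := exists_unitary_diagonal_of_posDef hh
  have hV' (j : J) : (Wᴴ * V j)ᴴ * (Wᴴ * V j) = 1 := by
    rw [conjTranspose_mul, conjTranspose_conjTranspose, Matrix.mul_assoc, ← Matrix.mul_assoc W,
      mul_conjTranspose_self_of_mem hW, Matrix.one_mul, hV]
  have hmoment' : ∑ j, a j • ((Wᴴ * V j) * (Wᴴ * V j)ᴴ) = c • 1 := by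
    rw [← conjTranspose_mul_smul_one_mul hW, ← hmoment]
    simp only [Finset.mul_sum, Finset.sum_mul, conjTranspose_mul, conjTranspose_conjTranspose,
      Matrix.mul_smul, Matrix.smul_mul, Matrix.mul_assoc]
  have hdiag (x : m) : ∑ j, a j * (((Wᴴ * V j) * (Wᴴ * V j)ᴴ) x x).re = c := by
    have := congrArg Complex.re (congrFun (congrFun hmoment' x) x)
    simpa [Matrix.sum_apply] using this
  rw [kempfNess_unitary_conjugate hW, kempfNess, logDet_diagonal fun x => (he x).ne', sub_nonneg]
  calc c * ∑ x, Real.log (e x)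
      = ∑ j, a j * ∑ x, (((Wᴴ * V j) * (Wᴴ * V j)ᴴ) x x).re * Real.log (e x) := by
        simp only [Finset.mul_sum, ← mul_assoc]
        rw [Finset.sum_comm]
        simp only [← Finset.sum_mul, hdiag]
    _ ≤ _ := by
        gcongr with j
        · exact ha j
        · exact sum_mul_log_le_logDet_conjTranspose_mul_diagonal_mul (hV' j) he

end Moment

section FirstVariation

open scoped ComplexOrder

variable {m : Type*} [Fintype m] [DecidableEq m]

lemma hasDerivAt_logDet_one_add_smul (A : Matrix m m ℂ) :
    HasDerivAt (fun t : ℝ => logDet (1 + t • A)) A.trace.re 0 := by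
  have hdet : HasDerivAt (fun t : ℂ => (1 + t • A).det) A.trace 0 := by
    rw [funext fun t : ℂ => det_one_add_smul t A]
    exact ((((hasDerivAt_id (0 : ℂ)).const_mul A.trace).const_add 1).fun_add
      ((Polynomial.hasDerivAt _ 0).fun_mul ((hasDerivAt_id (0 : ℂ)).fun_pow 2))).congr_deriv
        (by simp)
  have h1 : (1 + ((0 : ℝ) : ℂ) • A).det = 1 := by simp
  have hlog := hdet.comp_ofReal.clog_real (by rw [h1]; exact Complex.one_mem_slitPlane)
  have := Complex.reCLM.hasFDerivAt.comp_hasDerivAt (0 : ℝ) hlog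
  rw [h1, div_one] at this
  refine this.congr_of_eventuallyEq (.of_forall fun t => ?_)
  rw [Function.comp_apply, Complex.reCLM_apply, Complex.log_re, Complex.coe_smul]
  rfl

lemma eventually_posDef_one_add_smul {m : Type*} [Finite m] [DecidableEq m] {A : Matrix m m ℂ}
    (hA : A.IsHermitian) : ∀ᶠ t : ℝ in nhds 0, (1 + t • A).PosDef := by
  cases nonempty_fintype m
  obtain ⟨W, hW, e, rfl⟩ := exists_unitary_diagonal hA
  have hpos : ∀ᶠ t : ℝ in nhds 0, ∀ x, 0 < 1 + t * e x := by
    refine Filter.eventually_all.2 fun x => ?_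
    have : Continuous fun t : ℝ => 1 + t * e x := by fun_prop
    exact this.tendsto 0 |>.eventually_const_lt (by simp)
  filter_upwards [hpos] with t ht
  have hD : (diagonal fun x => ((1 + t * e x : ℝ) : ℂ)).PosDef :=
    PosDef.diagonal fun x => Complex.zero_lt_real.2 (ht x)
  rw [one_add_smul_unitary_conjugate hW]
  simpa only [star_eq_conjTranspose, conjTranspose_conjTranspose] using
    hD.conjTranspose_mul_mul_same (mulVec_injective_of_isometry
      (conjTranspose_mul_self_of_mem (Unitary.star_mem hW)))

lemma eq_zero_of_re_trace_sq {m : Type*} [Fintype m] {A : Matrix m m ℂ} (hA : A.IsHermitian)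
    (h : (A * A).trace.re = 0) : A = 0 := by
  have htrace : 0 ≤ (Aᴴ * A).trace := (posSemidef_conjTranspose_mul_self A).trace_nonneg
  rw [← trace_conjTranspose_mul_self_eq_zero_iff]
  refine Complex.ext ?_ (Complex.le_def.1 htrace).2.symm
  rwa [hA.eq]

variable {J : Type*} [Fintype J] {κ : J → Type*} [∀ j, Fintype (κ j)] [∀ j, DecidableEq (κ j)]

lemma kempfNess_one_of_isometry {V : ∀ j, Matrix m (κ j) ℂ} (hV : ∀ j, (V j)ᴴ * V j = 1)
    (a : J → ℝ) (c : ℝ) : kempfNess a c V 1 = 0 := by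
  simp [kempfNess, hV, logDet]

lemma hasDerivAt_kempfNess_one_add_smul {V : ∀ j, Matrix m (κ j) ℂ}
    (hV : ∀ j, (V j)ᴴ * V j = 1) (a : J → ℝ) (c : ℝ) (A : Matrix m m ℂ) :
    HasDerivAt (fun t : ℝ => kempfNess a c V (1 + t • A))
      ((∑ j, a j • (V j * (V j)ᴴ) - c • 1) * A).trace.re 0 := by
  have hframe (j : J) (t : ℝ) : (V j)ᴴ * (1 + t • A) * V j = 1 + t • ((V j)ᴴ * A * V j) := by
    rw [Matrix.mul_add, Matrix.add_mul, Matrix.mul_one, hV, Matrix.mul_smul, Matrix.smul_mul]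
  have htrace : ((∑ j, a j • (V j * (V j)ᴴ) - c • 1) * A).trace.re =
      ∑ j, a j * ((V j)ᴴ * A * V j).trace.re - c * A.trace.re := by
    simp [Matrix.sub_mul, Finset.sum_mul, trace_sum, trace_smul, Matrix.mul_assoc,
      trace_mul_comm (V _)]
  simp only [kempfNess, hframe, htrace]
  exact .sub (.fun_sum fun j _ => (hasDerivAt_logDet_one_add_smul _).const_mul _)
    ((hasDerivAt_logDet_one_add_smul A).const_mul c)

theorem moment_eq_of_kempfNess_nonneg {a : J → ℝ} {c : ℝ} {V : ∀ j, Matrix m (κ j) ℂ}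
    (hV : ∀ j, (V j)ᴴ * V j = 1)
    (hnonneg : ∀ h : Matrix m m ℂ, h.PosDef → 0 ≤ kempfNess a c V h) :
    ∑ j, a j • (V j * (V j)ᴴ) = c • 1 := by
  let E := ∑ j, a j • (V j * (V j)ᴴ) - c • (1 : Matrix m m ℂ)
  have hE : E.IsHermitian := by
    simp only [E, IsHermitian, conjTranspose_sub, conjTranspose_sum, conjTranspose_smul,
      star_trivial, conjTranspose_mul, conjTranspose_conjTranspose, conjTranspose_one]
  have hmin : IsLocalMin (fun t : ℝ => kempfNess a c V (1 + t • E)) 0 := by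
    filter_upwards [eventually_posDef_one_add_smul hE] with t ht
    rw [zero_smul, add_zero, kempfNess_one_of_isometry hV]
    exact hnonneg _ ht
  exact sub_eq_zero.1 (eq_zero_of_re_trace_sq hE
    (hmin.hasDerivAt_eq_zero (hasDerivAt_kempfNess_one_add_smul hV a c E)))

end FirstVariation

section Flag

open scoped ComplexOrder

variable {m : Type*} [LinearOrder m] {ι : Type*}

/-- The frames formed, for each `(i, k)`, by the columns of `X i` with index at most `k`; for fixed
`i` they span a flag. -/
def flagFrame (X : ι → Matrix m m ℂ) (j : ι × m) : Matrix m {x // x ≤ j.2} ℂ :=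
  (X j.1).submatrix id Subtype.val

lemma continuous_flagFrame : Continuous (flagFrame : (ι → Matrix m m ℂ) → _) :=
  continuous_pi fun j => (continuous_apply j.1).matrix_submatrix id Subtype.val

variable [Fintype m]

lemma flagFrame_mul_left (B : Matrix m m ℂ) (X : ι → Matrix m m ℂ) :
    flagFrame (fun i => B * X i) = fun j => B * flagFrame X j :=
  funext fun j => submatrix_mul B (X j.1) id id Subtype.val Function.bijective_id

lemma flagFrame_isometry {W : ι → Matrix m m ℂ} (hW : ∀ i, W i ∈ unitaryGroup m ℂ) (j : ι × m) :
    (flagFrame W j)ᴴ * flagFrame W j = 1 := by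
  rw [flagFrame, conjTranspose_submatrix, ← submatrix_mul _ _ _ _ _ Function.bijective_id,
    conjTranspose_mul_self_of_mem (hW j.1), submatrix_one _ Subtype.val_injective]

lemma flagFrame_mul_of_isUpperTriangular (W : ι → Matrix m m ℂ) {T : ι → Matrix m m ℂ}
    (hT : ∀ i, (T i).IsUpperTriangular) (j : ι × m) :
    flagFrame (fun i => W i * T i) j = flagFrame W j * (T j.1).toSquareBlockProp (· ≤ j.2) := by
  ext x ⟨y, hy⟩
  simp only [flagFrame, mul_apply, submatrix_apply, id, toSquareBlockProp_def, of_apply]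
  rw [← Fintype.sum_subtype_add_sum_subtype (· ≤ j.2), add_eq_left]
  exact Finset.sum_eq_zero fun z _ => by rw [hT j.1 (hy.trans_lt (not_le.1 z.2)), mul_zero]

lemma det_toSquareBlockProp_ne_zero_of_isUpperTriangular {T : Matrix m m ℂ}
    (hT : T.IsUpperTriangular) (hdet : T.det ≠ 0) (k : m) :
    (T.toSquareBlockProp (· ≤ k)).det ≠ 0 := by
  have hblock : (T.toSquareBlockProp (· ≤ k)).IsUpperTriangular := fun _ _ hij => hT hij
  rw [det_of_isUpperTriangular hT, Finset.prod_ne_zero_iff] at hdet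
  rw [det_of_isUpperTriangular hblock, Finset.prod_ne_zero_iff]
  exact fun j _ => hdet j (Finset.mem_univ _)

variable [Fintype ι]

lemma exists_unitary_kempfNess_flagFrame_eq {X : ι → Matrix m m ℂ} (hX : ∀ i, (X i).det ≠ 0)
    (a : ι × m → ℝ) (c : ℝ) : ∃ W : ι → Matrix m m ℂ, (∀ i, W i ∈ unitaryGroup m ℂ) ∧
      ∀ h : Matrix m m ℂ, h.PosDef → kempfNess a c (flagFrame X) h =
        kempfNess a c (flagFrame W) h + kempfNess a c (flagFrame X) 1 := by
  choose W hW T hT hXT using fun i => exists_unitary_mul_isUpperTriangular (hX i)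
  have hTdet (i : ι) : (T i).det ≠ 0 := fun h0 => hX i (by rw [hXT, det_mul, h0, mul_zero])
  have hgram (j : ι × m) {h : Matrix m m ℂ} (hh : h.PosDef) :
      logDet ((flagFrame X j)ᴴ * h * flagFrame X j) =
        logDet ((flagFrame W j)ᴴ * h * flagFrame W j) +
          2 * logDet ((T j.1).toSquareBlockProp (· ≤ j.2)) := by
    rw [← logDet_conjugate (hh.conjTranspose_mul_mul_same (mulVec_injective_of_isometry
        (flagFrame_isometry hW j))).det_pos.ne'
      (det_toSquareBlockProp_ne_zero_of_isUpperTriangular (hT j.1) (hTdet j.1) j.2), funext hXT,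
      flagFrame_mul_of_isUpperTriangular _ hT, conjTranspose_mul]
    simp only [Matrix.mul_assoc]
  refine ⟨W, hW, fun h hh => ?_⟩
  simp only [kempfNess, hgram _ hh, hgram _ PosDef.one, mul_add, Finset.sum_add_distrib]
  simp [flagFrame_isometry hW, logDet]
  ring

end Flag

section Capacity

open scoped ComplexOrder

variable {m : Type*} [Fintype m] [DecidableEq m]

lemma compactSpace_unitaryGroup : CompactSpace (unitaryGroup m ℂ) := by
  refine isCompact_iff_compactSpace.1 (IsCompact.of_isClosed_subset
    (isCompact_univ_pi fun _ => isCompact_univ_pi fun _ => isCompact_closedBall (0 : ℂ) 1) ?_ ?_)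
  · exact isClosed_unitary
  · exact fun W hW i _ j _ => mem_closedBall_zero_iff.2 (entry_norm_bound_of_unitary hW i j)

section Frames

variable {J : Type*} [Fintype J] {κ : J → Type*} [∀ j, Fintype (κ j)] [∀ j, DecidableEq (κ j)]

lemma kempfNess_conjugate {B h : Matrix m m ℂ} (hB : B.det ≠ 0) (hh : h.PosDef) (a : J → ℝ) (c : ℝ)
    (V : ∀ j, Matrix m (κ j) ℂ) :
    kempfNess a c V (Bᴴ * h * B) = kempfNess a c (fun j => B * V j) h - c * (2 * logDet B) := by
  rw [kempfNess, logDet_conjugate hh.det_pos.ne' hB]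
  simp only [kempfNess, conjTranspose_mul, Matrix.mul_assoc]
  ring

/-- The capacity of a weighted tuple of frames: the infimum of the exponential of its Kempf–Ness
functional, which vanishes exactly when the functional is unbounded below. -/
noncomputable def capacity (a : J → ℝ) (c : ℝ) (V : ∀ j, Matrix m (κ j) ℂ) : ℝ :=
  ⨅ h : {h : Matrix m m ℂ // h.PosDef}, Real.exp (kempfNess a c V h)

variable {a : J → ℝ} {c : ℝ} {V : ∀ j, Matrix m (κ j) ℂ}

lemma bddBelow_range_exp_kempfNess :
    BddBelow (Set.range fun h : {h : Matrix m m ℂ // h.PosDef} => Real.exp (kempfNess a c V h)) :=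
  ⟨0, Set.forall_mem_range.2 fun _ => (Real.exp_pos _).le⟩

lemma capacity_le {h : Matrix m m ℂ} (hh : h.PosDef) :
    capacity a c V ≤ Real.exp (kempfNess a c V h) :=
  ciInf_le bddBelow_range_exp_kempfNess ⟨h, hh⟩

lemma le_capacity {r : ℝ} (hr : ∀ h : Matrix m m ℂ, h.PosDef → r ≤ Real.exp (kempfNess a c V h)) :
    r ≤ capacity a c V :=
  have : Nonempty {h : Matrix m m ℂ // h.PosDef} := ⟨⟨1, .one⟩⟩
  le_ciInf fun h => hr h h.2

lemma upperSemicontinuous_capacity {X : Type*} [TopologicalSpace X] {V : X → ∀ j, Matrix m (κ j) ℂ}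
    (hV : Continuous V) (hiso : ∀ x j, (V x j)ᴴ * V x j = 1) (a : J → ℝ) (c : ℝ) :
    UpperSemicontinuous fun x => capacity a c (V x) :=
  upperSemicontinuous_ciInf (fun _ => bddBelow_range_exp_kempfNess) fun h =>
    (Real.continuous_exp.comp (continuous_kempfNess hV (fun x j =>
      h.2.conjTranspose_mul_mul_same (mulVec_injective_of_isometry (hiso x j))) a c)
    ).upperSemicontinuous

end Frames

end Capacity

section CapacityMaximum

open scoped ComplexOrder

variable {m : Type*} [Fintype m] [LinearOrder m] {ι : Type*} [Fintype ι] {a : ι × m → ℝ} {c : ℝ}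

lemma exists_unitary_forall_capacity_le (a : ι × m → ℝ) (c : ℝ) :
    ∃ W : ι → Matrix m m ℂ, (∀ i, W i ∈ unitaryGroup m ℂ) ∧
      ∀ W' : ι → Matrix m m ℂ, (∀ i, W' i ∈ unitaryGroup m ℂ) →
        capacity a c (flagFrame W') ≤ capacity a c (flagFrame W) := by
  have := compactSpace_unitaryGroup (m := m)
  have hcont : Continuous fun W : ι → unitaryGroup m ℂ => flagFrame fun i => (W i : Matrix m m ℂ) :=
    continuous_flagFrame.comp
      (continuous_pi fun i => continuous_subtype_val.comp (continuous_apply i))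
  have husc := upperSemicontinuous_capacity hcont (fun W => flagFrame_isometry fun i => (W i).2) a c
  obtain ⟨W, -, hW⟩ := (husc.upperSemicontinuousOn _).exists_isMaxOn
    Set.univ_nonempty isCompact_univ
  have hmax (W' : ι → unitaryGroup m ℂ) :
      capacity a c (flagFrame fun i => (W' i : Matrix m m ℂ)) ≤
        capacity a c (flagFrame fun i => (W i : Matrix m m ℂ)) := hW (Set.mem_univ W')
  exact ⟨fun i => W i, fun i => (W i).2, fun W' hW' => hmax fun i => ⟨W' i, hW' i⟩⟩

lemma kempfNess_flagFrame_nonneg_of_forall_capacity_le {W : ι → Matrix m m ℂ}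
    (hW : ∀ i, W i ∈ unitaryGroup m ℂ) (hpos : 0 < capacity a c (flagFrame W))
    (hmax : ∀ W' : ι → Matrix m m ℂ, (∀ i, W' i ∈ unitaryGroup m ℂ) →
      capacity a c (flagFrame W') ≤ capacity a c (flagFrame W))
    {h : Matrix m m ℂ} (hh : h.PosDef) : 0 ≤ kempfNess a c (flagFrame W) h := by
  obtain ⟨B, rfl⟩ := exists_eq_conjTranspose_mul_self hh.posSemidef
  have hB : B.det ≠ 0 := fun h0 => hh.det_pos.ne' (by rw [det_mul, h0, mul_zero])
  have hWdet (i : ι) : (W i).det ≠ 0 := (UnitaryGroup.det_isUnit ⟨W i, hW i⟩).ne_zero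
  obtain ⟨W', hW', hBW⟩ := exists_unitary_kempfNess_flagFrame_eq (X := fun i => B * W i)
    (fun i => by rw [det_mul]; exact mul_ne_zero hB (hWdet i)) a c
  rw [flagFrame_mul_left] at hBW
  have hshift {x : Matrix m m ℂ} (hx : x.PosDef) : kempfNess a c (flagFrame W) (Bᴴ * x * B) =
      kempfNess a c (flagFrame W') x + kempfNess a c (flagFrame W) (Bᴴ * B) := by
    have hone := kempfNess_conjugate hB PosDef.one a c (flagFrame W)
    rw [Matrix.mul_one] at hone
    rw [kempfNess_conjugate hB hx, hone, hBW x hx, add_sub_assoc]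
  have hscale : capacity a c (flagFrame W) * Real.exp (-kempfNess a c (flagFrame W) (Bᴴ * B)) ≤
      capacity a c (flagFrame W') := by
    refine le_capacity fun x hx => ?_
    have hBx : (Bᴴ * x * B).PosDef :=
      hx.conjTranspose_mul_mul_same (mulVec_injective_of_gram_posDef hh)
    calc _ ≤ Real.exp (kempfNess a c (flagFrame W) (Bᴴ * x * B)) *
          Real.exp (-kempfNess a c (flagFrame W) (Bᴴ * B)) := by
          gcongr
          exact capacity_le hBx
      _ = _ := by rw [hshift hx, ← Real.exp_add, add_neg_cancel_right]
  have := (mul_le_iff_le_one_right hpos).1 (hscale.trans (hmax W' hW'))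
  rwa [Real.exp_le_one_iff, neg_nonpos] at this

theorem exists_unitary_kempfNess_nonneg_of_bddBelow {X : ι → Matrix m m ℂ}
    (hX : ∀ i, (X i).det ≠ 0) {K : ℝ}
    (hK : ∀ h : Matrix m m ℂ, h.PosDef → K ≤ kempfNess a c (flagFrame X) h) :
    ∃ W : ι → Matrix m m ℂ, (∀ i, W i ∈ unitaryGroup m ℂ) ∧
      ∀ h : Matrix m m ℂ, h.PosDef → 0 ≤ kempfNess a c (flagFrame W) h := by
  obtain ⟨W₀, hW₀, hXW₀⟩ := exists_unitary_kempfNess_flagFrame_eq hX a c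
  obtain ⟨W, hW, hmax⟩ := exists_unitary_forall_capacity_le (ι := ι) a c
  refine ⟨W, hW, fun h hh => kempfNess_flagFrame_nonneg_of_forall_capacity_le hW ?_ hmax hh⟩
  refine (Real.exp_pos (K - kempfNess a c (flagFrame X) 1)).trans_le
    ((le_capacity fun h hh => ?_).trans (hmax W₀ hW₀))
  exact Real.exp_le_exp.2 (by linarith [hK h hh, hXW₀ h hh])

end CapacityMaximum

section FlagCoefficients

lemma exists_nonneg_forall_eq_sum_Ici_sub {n : ℕ} {y : Fin n → ℝ} (hy : Antitone y) :
    ∃ (a : Fin n → ℝ) (s : ℝ), (∀ k, 0 ≤ a k) ∧ 0 ≤ s ∧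
      ∀ x, y x = ∑ k ∈ Finset.Ici x, a k - s := by
  let s := ∑ x, |y x|
  have hys (x : Fin n) : 0 ≤ y x + s := by
    linarith [neg_abs_le (y x),
      Finset.single_le_sum (fun x _ => abs_nonneg (y x)) (Finset.mem_univ x)]
  let f : ℕ → ℝ := fun i => if hi : i < n then y ⟨i, hi⟩ + s else 0
  have hf (i : ℕ) : f (i + 1) ≤ f i := by
    by_cases hi : i + 1 < n
    · simpa [f, hi, (Nat.lt_succ_self i).trans hi] using hy (Fin.mk_le_mk.2 i.le_succ)
    · by_cases hi' : i < n <;> simp [f, hi, hi', hys]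
  refine ⟨fun k => f k - f (k + 1), s, fun k => sub_nonneg.2 (hf k),
    Finset.sum_nonneg fun x _ => abs_nonneg (y x), fun x => ?_⟩
  have htel : ∑ k ∈ Finset.Ici x, (f k - f (k + 1)) = f x - f n := by
    have hIco : ∑ k ∈ Finset.Ici x, (f (k + 1) - f k) = f n - f x := by
      rw [← Finset.sum_Ico_sub f x.2.le, ← Fin.map_valEmbedding_Ici, Finset.sum_map]
      rfl
    rw [← neg_sub (f n), ← hIco, ← Finset.sum_neg_distrib]
    simp only [neg_sub]
  rw [htel]
  simp [f]

end FlagCoefficients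

section Horn

open scoped ComplexOrder

section Moment

variable {m : Type*} [Fintype m] [LinearOrder m] {ι : Type*}

lemma flagFrame_mul_conjTranspose (X : ι → Matrix m m ℂ) (j : ι × m) :
    flagFrame X j * (flagFrame X j)ᴴ =
      X j.1 * diagonal (fun x => if x ≤ j.2 then 1 else 0) * (X j.1)ᴴ := by
  ext x y
  rw [mul_apply, mul_apply, ← Fintype.sum_subtype_add_sum_subtype (· ≤ j.2)]
  simp only [mul_diagonal]
  rw [Finset.sum_eq_zero fun (z : {z // ¬z ≤ j.2}) _ => by rw [if_neg z.2, mul_zero, zero_mul],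
    add_zero]
  refine Finset.sum_congr rfl fun z _ => ?_
  rw [if_pos z.2, mul_one]
  rfl

variable [Fintype ι] [LocallyFiniteOrderTop m]

lemma sum_smul_flagFrame_mul_conjTranspose (X : ι → Matrix m m ℂ) (a : ι × m → ℝ) :
    ∑ j, a j • (flagFrame X j * (flagFrame X j)ᴴ) =
      ∑ i, X i * diagonal (fun x => ((∑ k ∈ Finset.Ici x, a (i, k) : ℝ) : ℂ)) * (X i)ᴴ := by
  simp only [flagFrame_mul_conjTranspose, Fintype.sum_prod_type]
  refine Finset.sum_congr rfl fun i _ => ?_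
  have hdiag : diagonal (fun x => ((∑ k ∈ Finset.Ici x, a (i, k) : ℝ) : ℂ)) =
      ∑ k, a (i, k) • diagonal (fun x => if x ≤ k then (1 : ℂ) else 0) := by
    ext x y
    obtain rfl | hxy := eq_or_ne x y
    · simp [Matrix.sum_apply, Finset.sum_ite, ← Finset.filter_le_eq_Ici]
    · simp [Matrix.sum_apply, hxy]
  simp only [hdiag, Finset.mul_sum, Finset.sum_mul, Matrix.mul_smul, Matrix.smul_mul]

lemma moment_flagFrame_eq_iff {W : ι → Matrix m m ℂ} (hW : ∀ i, W i ∈ unitaryGroup m ℂ)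
    {y : ι → m → ℝ} {a : ι × m → ℝ} {s : ι → ℝ}
    (hy : ∀ i x, y i x = ∑ k ∈ Finset.Ici x, a (i, k) - s i) :
    ∑ j, a j • (flagFrame W j * (flagFrame W j)ᴴ) = (∑ i, s i) • 1 ↔
      ∑ i, W i * diagonal (fun x => (y i x : ℂ)) * (W i)ᴴ = 0 := by
  have hshift (i : ι) : W i * diagonal (fun x => (y i x : ℂ)) * (W i)ᴴ =
      W i * diagonal (fun x => ((∑ k ∈ Finset.Ici x, a (i, k) : ℝ) : ℂ)) * (W i)ᴴ - s i • 1 := by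
    have hdiag : diagonal (fun x => (y i x : ℂ)) =
        diagonal (fun x => ((∑ k ∈ Finset.Ici x, a (i, k) : ℝ) : ℂ)) - s i • 1 := by
      rw [← diagonal_one, ← diagonal_smul, diagonal_sub]
      simp [hy]
    rw [hdiag, Matrix.mul_sub, Matrix.sub_mul, Matrix.mul_smul, Matrix.smul_mul, Matrix.mul_one,
      mul_conjTranspose_self_of_mem (hW i)]
  rw [sum_smul_flagFrame_mul_conjTranspose, Finset.sum_congr rfl fun i _ => hshift i,
    Finset.sum_sub_distrib, sub_eq_zero, Finset.sum_smul]

end Moment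

variable {n : ℕ} {ι : Type*} [Fintype ι]

theorem exists_unitary_sum_diagonal_add_eq_zero {y y' : ι → Fin n → ℝ} (hy : ∀ i, Antitone (y i))
    (hy' : ∀ i, Antitone (y' i)) {U U' : ι → Matrix (Fin n) (Fin n) ℂ}
    (hU : ∀ i, U i ∈ unitaryGroup (Fin n) ℂ) (hU' : ∀ i, U' i ∈ unitaryGroup (Fin n) ℂ)
    (hsum : ∑ i, U i * diagonal (fun x => (y i x : ℂ)) * (U i)ᴴ = 0)
    (hsum' : ∑ i, U' i * diagonal (fun x => (y' i x : ℂ)) * (U' i)ᴴ = 0) :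
    ∃ W : ι → Matrix (Fin n) (Fin n) ℂ, (∀ i, W i ∈ unitaryGroup (Fin n) ℂ) ∧
      ∑ i, W i * diagonal (fun x => ((y i x + y' i x : ℝ) : ℂ)) * (W i)ᴴ = 0 := by
  choose a s ha hs hya using fun i => exists_nonneg_forall_eq_sum_Ici_sub (hy i)
  choose a' s' ha' hs' hya' using fun i => exists_nonneg_forall_eq_sum_Ici_sub (hy' i)
  have hnonneg {h : Matrix (Fin n) (Fin n) ℂ} (hh : h.PosDef) :=
    kempfNess_nonneg_of_moment_eq (a := fun j => a j.1 j.2) (fun j => ha j.1 j.2)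
      (flagFrame_isometry hU) ((moment_flagFrame_eq_iff hU hya).2 hsum) hh
  have hnonneg' {h : Matrix (Fin n) (Fin n) ℂ} (hh : h.PosDef) :=
    kempfNess_nonneg_of_moment_eq (a := fun j => a' j.1 j.2) (fun j => ha' j.1 j.2)
      (flagFrame_isometry hU') ((moment_flagFrame_eq_iff hU' hya').2 hsum') hh
  obtain ⟨w, K, hK⟩ := exists_circle_kempfNess_add_half_smul_bddBelow (fun j => ha j.1 j.2)
    (fun j => ha' j.1 j.2) (Finset.sum_nonneg fun i _ => hs i) (Finset.sum_nonneg fun i _ => hs' i)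
    (flagFrame_isometry hU) (flagFrame_isometry hU') (fun _ => hnonneg) (fun _ => hnonneg')
  have hX (i : ι) : (U i + (w : ℂ) • (2⁻¹ : ℂ) • U' i).det ≠ 0 := by
    have hgram := posDef_of_smul_one_le (by norm_num) (quarter_smul_one_le_gram
      (conjTranspose_mul_self_of_mem (hU i)) (conjTranspose_mul_self_of_mem (hU' i)) w)
    exact fun h0 => hgram.det_pos.ne' (by rw [det_mul, h0, mul_zero])
  obtain ⟨W, hW, hWnonneg⟩ := exists_unitary_kempfNess_nonneg_of_bddBelow hX hK
  have hmoment := moment_eq_of_kempfNess_nonneg (flagFrame_isometry hW) hWnonneg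
  rw [← Finset.sum_add_distrib] at hmoment
  refine ⟨W, hW, (moment_flagFrame_eq_iff hW fun i x => ?_).1 hmoment⟩
  simp only [hya, hya', Pi.add_apply, Finset.sum_add_distrib]
  ring

end Horn

section Mixture

variable {n : ℕ} {ι : Type*} [Fintype ι]

lemma exists_unitary_diagonal_antitone {A : Matrix (Fin n) (Fin n) ℂ} (hA : A.IsHermitian) :
    ∃ W ∈ unitaryGroup (Fin n) ℂ, ∃ e : Fin n → ℝ, Antitone e ∧
      A = W * diagonal (fun x => (e x : ℂ)) * Wᴴ := by
  obtain ⟨W, hW, e, he⟩ := exists_unitary_diagonal hA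
  let τ := Tuple.sort (-e)
  have hmul (B C : Matrix (Fin n) (Fin n) ℂ) :
      B.submatrix id τ * C.submatrix τ id = B * C := by
    rw [submatrix_mul_equiv, submatrix_id_id]
  refine ⟨W.submatrix id τ, mem_unitaryGroup_iff.2 ?_, e ∘ τ, fun x y hxy => ?_, ?_⟩
  · rw [star_eq_conjTranspose, conjTranspose_submatrix, hmul, mul_conjTranspose_self_of_mem hW]
  · exact neg_le_neg_iff.1 (Tuple.monotone_sort (-e) hxy)
  · rw [he, conjTranspose_submatrix, ← hmul, ← submatrix_mul_equiv W _ id τ τ,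
      submatrix_diagonal_equiv]
    rfl

/-- The nonnegative weights `p` for which `σ` is the combination of unitary conjugates of `ρ` with
weights `p`: the set whose convexity implies the theorem. -/
def mixtureWeights (ι : Type*) [Fintype ι] (ρ σ : Matrix (Fin n) (Fin n) ℂ) : Set (ι → ℝ) :=
  {p | (∀ i, 0 ≤ p i) ∧ ∃ U : ι → Matrix (Fin n) (Fin n) ℂ,
    (∀ i, U i ∈ unitaryGroup (Fin n) ℂ) ∧ σ = ∑ i, (p i : ℂ) • (U i * ρ * (U i)ᴴ)}

variable {ρ σ : Matrix (Fin n) (Fin n) ℂ} {p : ι → ℝ}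

lemma comp_perm_mem_mixtureWeights (hp : p ∈ mixtureWeights ι ρ σ) (τ : Equiv.Perm ι) :
    p ∘ τ ∈ mixtureWeights ι ρ σ := by
  obtain ⟨hp0, U, hU, rfl⟩ := hp
  exact ⟨fun i => hp0 (τ i), U ∘ τ, fun i => hU (τ i),
    (Equiv.sum_comp τ fun i => (p i : ℂ) • (U i * ρ * (U i)ᴴ)).symm⟩

lemma isHermitian_of_mem_mixtureWeights (hρ : ρ.IsHermitian) (hp : p ∈ mixtureWeights ι ρ σ) :
    σ.IsHermitian := by
  obtain ⟨-, U, -, rfl⟩ := hp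
  simp only [IsHermitian, conjTranspose_sum, conjTranspose_smul, conjTranspose_mul, hρ.eq,
    conjTranspose_conjTranspose, Matrix.mul_assoc, RCLike.star_def, Complex.conj_ofReal]

lemma diagonal_ofReal_smul (c : ℝ) (e : Fin n → ℝ) :
    diagonal (fun x => ((c • e) x : ℂ)) = (c : ℂ) • diagonal (fun x => (e x : ℂ)) := by
  rw [← diagonal_smul]
  exact congrArg diagonal (funext fun x => Complex.ofReal_mul _ _)

lemma mul_diagonal_smul_mul_conjTranspose {R : Matrix (Fin n) (Fin n) ℂ}
    (hR : R ∈ unitaryGroup (Fin n) ℂ) {e : Fin n → ℝ}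
    (hρ : ρ = R * diagonal (fun x => (e x : ℂ)) * Rᴴ) (c : ℝ) (W : Matrix (Fin n) (Fin n) ℂ) :
    W * diagonal (fun x => ((c • e) x : ℂ)) * Wᴴ = (c : ℂ) • (W * Rᴴ * ρ * (W * Rᴴ)ᴴ) := by
  have hcancel : W * Rᴴ * ρ * (W * Rᴴ)ᴴ =
      W * (Rᴴ * R) * diagonal (fun x => (e x : ℂ)) * (Rᴴ * R) * Wᴴ := by
    simp only [hρ, conjTranspose_mul, conjTranspose_conjTranspose, Matrix.mul_assoc]
  rw [hcancel, conjTranspose_mul_self_of_mem hR, diagonal_ofReal_smul, Matrix.mul_smul,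
    Matrix.smul_mul, Matrix.mul_one, Matrix.mul_one]

lemma mem_mixtureWeights_iff {R S : Matrix (Fin n) (Fin n) ℂ} (hR : R ∈ unitaryGroup (Fin n) ℂ)
    (hS : S ∈ unitaryGroup (Fin n) ℂ) {e d : Fin n → ℝ}
    (hρ : ρ = R * diagonal (fun x => (e x : ℂ)) * Rᴴ)
    (hσ : -σ = S * diagonal (fun x => (d x : ℂ)) * Sᴴ) :
    p ∈ mixtureWeights ι ρ σ ↔ (∀ i, 0 ≤ p i) ∧
      ∃ W : Option ι → Matrix (Fin n) (Fin n) ℂ, (∀ o, W o ∈ unitaryGroup (Fin n) ℂ) ∧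
        ∑ o, W o * diagonal (fun x => (o.elim d (fun i => p i • e) x : ℂ)) * (W o)ᴴ = 0 := by
  simp only [Fintype.sum_option, Option.elim_none, Option.elim_some,
    mul_diagonal_smul_mul_conjTranspose hR hρ]
  refine and_congr_right fun _ => ⟨?_, ?_⟩
  · rintro ⟨U, hU, hσU⟩
    refine ⟨fun o => o.elim S fun i => U i * R, ?_, ?_⟩
    · rintro (_ | i)
      exacts [hS, mul_mem (hU i) hR]
    · simp only [Option.elim_none, Option.elim_some, Matrix.mul_assoc _ R,
        mul_conjTranspose_self_of_mem hR, Matrix.mul_one, ← hσ, ← hσU, neg_add_cancel]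
  · rintro ⟨W, hW, hsum⟩
    refine ⟨fun i => S * (W none)ᴴ * (W (some i) * Rᴴ), fun i => ?_, ?_⟩
    · exact mul_mem (mul_mem hS (Unitary.star_mem (hW none)))
        (mul_mem (hW _) (Unitary.star_mem hR))
    · have hconj : ∑ i, (p i : ℂ) • (S * (W none)ᴴ * (W (some i) * Rᴴ) * ρ *
            (S * (W none)ᴴ * (W (some i) * Rᴴ))ᴴ) =
          S * (W none)ᴴ * (∑ i, (p i : ℂ) • (W (some i) * Rᴴ * ρ * (W (some i) * Rᴴ)ᴴ)) *
            (S * (W none)ᴴ)ᴴ := by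
        simp only [Matrix.mul_sum, Matrix.sum_mul, Matrix.mul_smul, Matrix.smul_mul,
          conjTranspose_mul, Matrix.mul_assoc]
      have hcancel : S * (W none)ᴴ * (W none * diagonal (fun x => (d x : ℂ)) * (W none)ᴴ) *
            (S * (W none)ᴴ)ᴴ = S * ((W none)ᴴ * W none) * diagonal (fun x => (d x : ℂ)) *
            ((W none)ᴴ * W none) * Sᴴ := by
        simp only [conjTranspose_mul, conjTranspose_conjTranspose, Matrix.mul_assoc]
      rw [hconj, eq_neg_of_add_eq_zero_right hsum, Matrix.mul_neg, Matrix.neg_mul, hcancel,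
        conjTranspose_mul_self_of_mem (hW none), Matrix.mul_one, Matrix.mul_one, ← hσ, neg_neg]

theorem convex_mixtureWeights (hρ : ρ.IsHermitian) : Convex ℝ (mixtureWeights ι ρ σ) := by
  intro p hp p' hp' α β hα hβ hαβ
  obtain ⟨R, hR, e, he, hρe⟩ := exists_unitary_diagonal_antitone hρ
  obtain ⟨S, hS, d, hd, hσd⟩ :=
    exists_unitary_diagonal_antitone (isHermitian_of_mem_mixtureWeights hρ hp).neg
  rw [mem_mixtureWeights_iff hR hS hρe hσd] at hp hp' ⊢
  obtain ⟨hp, W, hW, hsum⟩ := hp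
  obtain ⟨hp', W', hW', hsum'⟩ := hp'
  let y (r : ι → ℝ) (o : Option ι) : Fin n → ℝ := o.elim d fun i => r i • e
  have hanti {γ : ℝ} (hγ : 0 ≤ γ) {r : ι → ℝ} (hr : ∀ i, 0 ≤ r i) (o : Option ι) :
      Antitone (γ • y r o) := by
    cases o with
    | none => exact hd.const_smul hγ
    | some i => exact (he.const_smul (hr i)).const_smul hγ
  have hscale (γ : ℝ) {r : ι → ℝ} {W : Option ι → Matrix (Fin n) (Fin n) ℂ}
      (h : ∑ o, W o * diagonal (fun x => (y r o x : ℂ)) * (W o)ᴴ = 0) :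
      ∑ o, W o * diagonal (fun x => ((γ • y r o) x : ℂ)) * (W o)ᴴ = 0 := by
    simp only [diagonal_ofReal_smul, Matrix.mul_smul, Matrix.smul_mul, ← Finset.smul_sum, h,
      smul_zero]
  have hy (o : Option ι) : y (α • p + β • p') o = α • y p o + β • y p' o := by
    cases o with
    | none => simp only [y, Option.elim_none, ← add_smul, hαβ, one_smul]
    | some i => simp only [y, Option.elim_some, Pi.add_apply, Pi.smul_apply, add_smul, smul_assoc]
  refine ⟨fun i => add_nonneg (mul_nonneg hα (hp i)) (mul_nonneg hβ (hp' i)), ?_⟩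
  change ∃ V : Option ι → _, _ ∧ ∑ o, V o * diagonal (fun x => (y (α • p + β • p') o x : ℂ)) * _ = 0
  simp only [hy]
  exact exists_unitary_sum_diagonal_add_eq_zero (hanti hα hp) (hanti hβ hp') hW hW'
    (hscale α hsum) (hscale β hsum')

end Mixture

section Rado

variable {N : ℕ}

lemma psum_eq_sum (v : Fin N → ℝ) : psum v N = ∑ i, v i := by
  simp only [psum, Fin.is_lt, Finset.filter_true]

lemma psum_succ_eq_sum_Iic (v : Fin N → ℝ) (k : Fin N) :
    psum v (k + 1) = ∑ i ∈ Finset.Iic k, v i := by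
  refine Finset.sum_congr (Finset.ext fun i => ?_) fun _ _ => rfl
  simp only [Finset.mem_filter_univ, Finset.mem_Iic, Fin.le_def, Nat.lt_succ_iff]

lemma sum_mul_le_sum_mul_of_psum_le {u v y : Fin N → ℝ} (hy : Antitone y)
    (hle : ∀ k < N, psum u k ≤ psum v k) (heq : psum u N = psum v N) :
    ∑ i, u i * y i ≤ ∑ i, v i * y i := by
  obtain ⟨a, s, ha, -, hys⟩ := exists_nonneg_forall_eq_sum_Ici_sub hy
  have abel (w : Fin N → ℝ) : ∑ i, w i * y i = ∑ k, a k * psum w (k + 1) - psum w N * s := by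
    simp only [hys, mul_sub, Finset.sum_sub_distrib, psum_succ_eq_sum_Iic, psum_eq_sum,
      Finset.mul_sum, ← Finset.sum_mul]
    congr 1
    rw [Finset.sum_comm' (t' := Finset.univ) (s' := Finset.Iic) (by simp)]
    exact Finset.sum_congr rfl fun _ _ => Finset.sum_congr rfl fun _ _ => mul_comm _ _
  rw [abel, abel, heq]
  refine sub_le_sub_right (Finset.sum_le_sum fun k _ => mul_le_mul_of_nonneg_left ?_ (ha k)) _
  rcases (Nat.succ_le_of_lt k.is_lt).lt_or_eq with hk | hk
  · exact hle _ hk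
  · rw [show (k : ℕ) + 1 = N from hk]
    exact heq.le

theorem mem_convexHull_perm_of_majorizes {p q : Fin N → ℝ} (h : Majorizes q p) :
    q ∈ convexHull ℝ (Set.range fun κ : Equiv.Perm (Fin N) => p ∘ κ) := by
  obtain ⟨-, -, ⟨σ, rfl⟩, hq, ⟨τ, rfl⟩, -, hle, heq⟩ := h
  by_contra hmem
  obtain ⟨f, u, hfp, hfq⟩ := geometric_hahn_banach_closed_point (convex_convexHull ℝ _)
    ((Set.finite_range _).isCompact_convexHull ℝ).isClosed hmem
  let w (i : Fin N) : ℝ := f (Pi.single i 1)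
  have hf (v : Fin N → ℝ) : f v = ∑ i, v i * w i := by
    conv_lhs => rw [pi_eq_sum_univ' v]
    simp only [map_sum, map_smul, smul_eq_mul, w]
  let κ := Tuple.sort (-w)
  have hwκ : Antitone (w ∘ κ) := fun i j hij => neg_le_neg_iff.1 (Tuple.monotone_sort (-w) hij)
  have hf_sort (v : Fin N → ℝ) : f v = ∑ i, v (κ i) * (w ∘ κ) i := by
    rw [hf, ← Equiv.sum_comp κ]
    rfl
  refine hfq.not_ge ?_
  calc f q = ∑ i, (q ∘ σ) ((κ.trans σ.symm) i) * (w ∘ κ) i := by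
        simp only [hf_sort, Function.comp_apply, Equiv.trans_apply, Equiv.apply_symm_apply]
    _ ≤ ∑ i, (q ∘ σ) i * (w ∘ κ) i := (hq.monovary hwκ).sum_comp_perm_mul_le_sum_mul
    _ ≤ ∑ i, (p ∘ τ) i * (w ∘ κ) i := sum_mul_le_sum_mul_of_psum_le hwκ hle heq
    _ = f (p ∘ (κ.symm.trans τ)) := by
        simp only [hf_sort, Function.comp_apply, Equiv.trans_apply, Equiv.symm_apply_apply]
    _ ≤ u := (hfp _ (subset_convexHull ℝ _ ⟨_, rfl⟩)).le

end Rado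

theorem convex_combination_isospectral {n N : ℕ}
    (ρ σ : Matrix (Fin n) (Fin n) ℂ) (hρ : ρ.IsHermitian) (hσ : σ.IsHermitian)
    (p : Fin N → ℝ) (hp : ∀ i, 0 ≤ p i) (hps : ∑ i, p i = 1)
    (U : Fin N → Matrix (Fin n) (Fin n) ℂ)
    (hU : ∀ i, U i ∈ Matrix.unitaryGroup (Fin n) ℂ)
    (hσeq : σ = ∑ i, (p i : ℂ) • (U i * ρ * (U i)ᴴ))
    (q : Fin N → ℝ) (hq : ∀ i, 0 ≤ q i) (hqs : ∑ i, q i = 1)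
    (hmaj : Majorizes q p) :
    ∃ V : Fin N → Matrix (Fin n) (Fin n) ℂ,
      (∀ i, V i ∈ Matrix.unitaryGroup (Fin n) ℂ) ∧
      σ = ∑ i, (q i : ℂ) • (V i * ρ * (V i)ᴴ) := by
  have hpmem : p ∈ mixtureWeights (Fin N) ρ σ := ⟨hp, U, hU, hσeq⟩
  have hsub : convexHull ℝ (Set.range fun κ : Equiv.Perm (Fin N) => p ∘ κ) ⊆
      mixtureWeights (Fin N) ρ σ :=
    convexHull_min (Set.range_subset_iff.2 (comp_perm_mem_mixtureWeights hpmem))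
      (convex_mixtureWeights hρ)
  exact (hsub (mem_convexHull_perm_of_majorizes hmaj)).2
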